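/- arXiv:1903.12567 — 9 statements merged into one kernel-verified Lean document; each statement's English description precedes it below -/
import Mathlib

section
/- Let G be a group and let x, y, z be elements of G satisfying x*y = y*x, x*z*x = z*x*z, and y*z*y = z*y*z. Then (x*x*y*z)^3 = (x*y*z)^4. -/
/-!
The generators `x`, `y`, `z` satisfy the Artin relations of type `A₃` with `z` as the middle node,
and `c = x * y * z` is a Coxeter element. Its square is the Garside element: it exchanges `x` and
`y` and commutes with `z`, the latter because `x * y` and `z` satisfy the relation of type `B₂`.
Since `(c * x) ^ 2 = c ^ 2 * (x * z)`, moving `c ^ 2` to the right gives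
`(x * c) ^ 3 = x * (y * z * c ^ 2) * c = c ^ 4`.
-/

theorem commute_mul_pow_right_of_pow_eq {M : Type*} [Monoid M] {a b : M} {n : ℕ}
    (h : (a * b) ^ n = (b * a) ^ n) : Commute ((a * b) ^ n) b :=
  calc
    (a * b) ^ n * b = (b * a) ^ n * b := by rw [h]
    _ = b * (a * b) ^ n := mul_pow_mul b a n

section ArtinRelations

variable {M : Type*} [Monoid M] {x y z : M}

theorem mul_mul_mul_eq_of_commute_of_braid (hxy : Commute x y)
    (hxz : x * z * x = z * x * z) : x * y * z * x = y * z * x * z :=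
  calc
    x * y * z * x = y * (x * z * x) := by rw [hxy.eq]; simp only [mul_assoc]
    _ = y * z * x * z := by rw [hxz]; simp only [mul_assoc]

theorem mul_mul_sq_rotate_of_commute_of_braid (hxy : Commute x y)
    (hxz : x * z * x = z * x * z) (hyz : y * z * y = z * y * z) :
    (x * y * z) ^ 2 = (z * (x * y)) ^ 2 :=
  calc
    (x * y * z) ^ 2 = x * (y * z) * (x * y) * z := by simp only [sq, mul_assoc]
    _ = x * (y * z * y) * x * z := by rw [hxy.eq]; simp only [mul_assoc]
    _ = x * z * y * (z * x * z) := by rw [hyz]; simp only [mul_assoc]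
    _ = x * z * (y * x) * z * x := by rw [← hxz]; simp only [mul_assoc]
    _ = (x * z * x) * y * z * x := by rw [← hxy.eq]; simp only [mul_assoc]
    _ = z * x * (z * y * z) * x := by rw [hxz]; simp only [mul_assoc]
    _ = z * x * y * z * (y * x) := by rw [← hyz]; simp only [mul_assoc]
    _ = (z * (x * y)) ^ 2 := by rw [← hxy.eq]; simp only [sq, mul_assoc]

theorem semiconjBy_mul_mul_sq_of_commute_of_braid (hxy : Commute x y)
    (hxz : x * z * x = z * x * z) (hyz : y * z * y = z * y * z) :
    SemiconjBy ((x * y * z) ^ 2) x y :=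
  calc
    (x * y * z) ^ 2 * x = x * y * z * (x * y * z * x) := by simp only [sq, mul_assoc]
    _ = x * y * (z * y * z) * x * z := by
      rw [mul_mul_mul_eq_of_commute_of_braid hxy hxz]; simp only [mul_assoc]
    _ = (x * y) * y * z * (y * x) * z := by rw [← hyz]; simp only [mul_assoc]
    _ = (y * x) * y * z * (x * y) * z := by rw [hxy.eq]
    _ = y * (x * y * z) ^ 2 := by simp only [sq, mul_assoc]

theorem mul_mul_mul_sq_of_commute_of_braid (hxy : Commute x y)
    (hxz : x * z * x = z * x * z) (hyz : y * z * y = z * y * z) :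
    (x * y * z * x) ^ 2 = y * z * (x * y * z) ^ 2 := by
  have semiconj_x : SemiconjBy ((x * y * z) ^ 2) x y :=
    semiconjBy_mul_mul_sq_of_commute_of_braid hxy hxz hyz
  have commute_z : Commute ((x * y * z) ^ 2) z :=
    commute_mul_pow_right_of_pow_eq (mul_mul_sq_rotate_of_commute_of_braid hxy hxz hyz)
  calc
    (x * y * z * x) ^ 2 = x * y * z * x * (y * z * x * z) := by
      rw [sq]; nth_rw 2 [mul_mul_mul_eq_of_commute_of_braid hxy hxz]
    _ = (x * y * z) ^ 2 * (x * z) := by simp only [sq, mul_assoc]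
    _ = y * z * (x * y * z) ^ 2 := (semiconj_x.mul_right commute_z).eq

theorem stmt_0_general (hxy : Commute x y)
    (hxz : x * z * x = z * x * z) (hyz : y * z * y = z * y * z) :
    (x * x * y * z) ^ 3 = (x * y * z) ^ 4 :=
  calc
    (x * x * y * z) ^ 3 = x * (x * y * z * x) ^ 2 * (x * y * z) := by
      simp only [pow_succ, pow_zero, one_mul, mul_assoc]
    _ = x * (y * z * (x * y * z) ^ 2) * (x * y * z) := by
      rw [mul_mul_mul_sq_of_commute_of_braid hxy hxz hyz]
    _ = (x * y * z) ^ 4 := by simp only [pow_succ, pow_zero, one_mul, mul_assoc]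

end ArtinRelations

/-- Equation (4) of the paper: in any group, if `x*y = y*x`, `x*z*x = z*x*z` and
`y*z*y = z*y*z`, then `(x*x*y*z)^3 = (x*y*z)^4`. -/
theorem stmt_0 (G : Type*) [Group G] (x y z : G)
    (hxy : x * y = y * x) (hxz : x * z * x = z * x * z) (hyz : y * z * y = z * y * z) :
    (x * x * y * z) ^ 3 = (x * y * z) ^ 4 :=
  stmt_0_general hxy hxz hyz
end

section
/- Let G be a group and let x, y, z be elements of G satisfying x*y = y*x, x*z*x = z*x*z, and y*z*y = z*y*z. Then (x*y*z)^4 = (x*z*y)^4. -/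
/-!
Put `c = x * y * z`. A braid relation `a * b * a = b * a * b` says that `a * b` carries `a` to `b`,
so `c ^ 2 = x * y * (z * x) * (y * z)` carries `y` to `z`, then `z` to `x`, and fixes `x`. As
`c = y * (x * z)`, the word `(x * z * y) ^ 4` is `x * z * c ^ 3 * y = x * z * c * x * c ^ 2`, and
`x * z * c * x` is `c ^ 2`.
-/

section Braid

theorem semiconjBy_mul_of_braid {S : Type*} [Semigroup S] {a b : S}
    (hab : a * b * a = b * a * b) : SemiconjBy (a * b) a b :=
  hab.trans (mul_assoc b a b)

variable {M : Type*} [Monoid M] {x y z : M}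

theorem semiconjBy_sq_of_braid (hxy : Commute x y) (hxz : x * z * x = z * x * z)
    (hyz : y * z * y = z * y * z) : SemiconjBy ((x * y * z) ^ 2) y x := by
  have hx : SemiconjBy (x * y) x x := (Commute.refl x).mul_left hxy.symm
  have hzx : SemiconjBy (z * x) z x := semiconjBy_mul_of_braid hxz.symm
  have hyz' : SemiconjBy (y * z) y z := semiconjBy_mul_of_braid hyz
  have hsq : (x * y * z) ^ 2 = x * y * (z * x) * (y * z) := by simp only [pow_two, mul_assoc]
  rw [hsq]
  exact (hx.mul_left hzx).mul_left hyz'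

theorem mul_mul_mul_eq_sq_of_braid (hxy : Commute x y) (hxz : x * z * x = z * x * z)
    (hyz : y * z * y = z * y * z) : x * z * (x * y * z) * x = (x * y * z) ^ 2 := by
  calc x * z * (x * y * z) * x
      = x * z * y * (x * z * x) := by rw [hxy.eq]; simp only [mul_assoc]
    _ = x * (z * y * z) * x * z := by rw [hxz]; simp only [mul_assoc]
    _ = x * y * z * (y * x * z) := by rw [← hyz]; simp only [mul_assoc]
    _ = (x * y * z) ^ 2 := by rw [← hxy.eq, pow_two]

end Braid

theorem stmt_1_general {M : Type*} [Monoid M] (x y z : M)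
    (hxy : x * y = y * x) (hxz : x * z * x = z * x * z) (hyz : y * z * y = z * y * z) :
    (x * y * z) ^ 4 = (x * z * y) ^ 4 := by
  have hrot : y * (x * z) = x * y * z := by rw [hxy, mul_assoc]
  symm
  calc (x * z * y) ^ 4
      = x * z * (x * y * z) ^ 3 * y := by rw [pow_succ, ← mul_assoc, mul_pow_mul, hrot]
    _ = x * z * (x * y * z) * ((x * y * z) ^ 2 * y) := by
        rw [pow_succ' _ 2]; simp only [mul_assoc]
    _ = x * z * (x * y * z) * x * (x * y * z) ^ 2 := by
        rw [(semiconjBy_sq_of_braid hxy hxz hyz).eq, ← mul_assoc]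
    _ = (x * y * z) ^ 4 := by
        rw [mul_mul_mul_eq_sq_of_braid hxy hxz hyz, ← pow_add]

/-- Equation (5) of the paper: in any group, if `x*y = y*x`, `x*z*x = z*x*z` and
`y*z*y = z*y*z`, then `(x*y*z)^4 = (x*z*y)^4`. -/
theorem stmt_1 (G : Type*) [Group G] (x y z : G)
    (hxy : x * y = y * x) (hxz : x * z * x = z * x * z) (hyz : y * z * y = z * y * z) :
    (x * y * z) ^ 4 = (x * z * y) ^ 4 :=
  stmt_1_general x y z hxy hxz hyz
end

section
/- In B4, the element (σ1*σ2*σ3)^4 lies in the center of B4. -/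
/-- Braid relations of the braid group `B₄` on generators `σ1 = of 0`, `σ2 = of 1`,
`σ3 = of 2`. -/
def B4rels : Set (FreeGroup (Fin 3)) :=
  {FreeGroup.of 0 * FreeGroup.of 1 * FreeGroup.of 0 *
      (FreeGroup.of 1 * FreeGroup.of 0 * FreeGroup.of 1)⁻¹,
   FreeGroup.of 1 * FreeGroup.of 2 * FreeGroup.of 1 *
      (FreeGroup.of 2 * FreeGroup.of 1 * FreeGroup.of 2)⁻¹,
   FreeGroup.of 0 * FreeGroup.of 2 * (FreeGroup.of 2 * FreeGroup.of 0)⁻¹}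

/-- The braid group on 4 strands, as a presented group. -/
abbrev B4 : Type := PresentedGroup B4rels

/-!
For generators `s 0, …, s n` satisfying the braid relations, left multiplication by
`δ = s 0 * ⋯ * s n` shifts them: `δ * s i = s (i + 1) * δ`. Writing `δ = s 0 * x = y * s n`, the
shift gives `δ * y = x * δ`, hence `s 0 * δ ^ 2 = s 0 * x * δ * s n = δ ^ 2 * s n`. So `δ ^ 2`
closes the orbit of the shift, and `δ ^ (n + 2)` carries each generator once around this orbit,
back to itself.
-/

theorem semiconjBy_list_prod_ofFn {M : Type*} [Monoid M] {n : ℕ} {a : M} {f g : Fin n → M}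
    (h : ∀ i, SemiconjBy a (f i) (g i)) :
    SemiconjBy a (List.ofFn f).prod (List.ofFn g).prod := by
  induction n with
  | zero => simp
  | succ n ih =>
    simpa only [List.ofFn_succ, List.prod_cons] using (h 0).mul_right (ih fun i => h i.succ)

/-- A family of elements of a monoid satisfying Artin's relations for the standard generators of
the braid group on `n + 1` strands; index `i : Fin n` stands for the generator usually written
`σᵢ₊₁`. -/
structure IsBraidFamily {M : Type*} [Monoid M] {n : ℕ} (s : Fin n → M) : Prop where
  braid : ∀ i j : Fin n, i.val + 1 = j.val → s i * s j * s i = s j * s i * s j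
  commute : ∀ i j : Fin n, i.val + 1 < j.val → Commute (s i) (s j)

namespace IsBraidFamily

variable {M : Type*} [Monoid M] {n : ℕ}

theorem tail {s : Fin (n + 1) → M} (hs : IsBraidFamily s) : IsBraidFamily (Fin.tail s) where
  braid i j hij := hs.braid i.succ j.succ (by simpa using hij)
  commute i j hij := hs.commute i.succ j.succ (by simpa using hij)

theorem semiconjBy_prod_zero_one {s : Fin (n + 2) → M} (hs : IsBraidFamily s) :
    SemiconjBy (List.ofFn s).prod (s 0) (s 1) := by
  set t : Fin n → M := fun i => s i.succ.succ
  have hprod : (List.ofFn s).prod = s 0 * s 1 * (List.ofFn t).prod := by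
    simp [List.ofFn_succ, mul_assoc, t]
  have hhead : SemiconjBy (s 0 * s 1) (s 0) (s 1) := by
    simpa only [SemiconjBy, mul_assoc] using hs.braid 0 1 rfl
  have htail : Commute (List.ofFn t).prod (s 0) :=
    Commute.list_prod_left _ _ <| List.forall_mem_ofFn_iff.mpr fun i =>
      (hs.commute 0 i.succ.succ (by simp)).symm
  rw [hprod]
  exact hhead.mul_left htail

theorem semiconjBy_prod_castSucc_succ {s : Fin (n + 1) → M} (hs : IsBraidFamily s) (i : Fin n) :
    SemiconjBy (List.ofFn s).prod (s i.castSucc) (s i.succ) := by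
  induction n with
  | zero => exact i.elim0
  | succ n ih =>
    cases i using Fin.cases with
    | zero => exact hs.semiconjBy_prod_zero_one
    | succ i =>
      have hhead : Commute (s 0) (s i.succ.succ) := hs.commute 0 i.succ.succ (by simp)
      rw [List.ofFn_succ, List.prod_cons]
      exact SemiconjBy.mul_left hhead (ih hs.tail i)

theorem semiconjBy_prod_pow {s : Fin (n + 1) → M} (hs : IsBraidFamily s) (k : ℕ)
    {i j : Fin (n + 1)} (hij : i.val + k = j.val) :
    SemiconjBy ((List.ofFn s).prod ^ k) (s i) (s j) := by
  induction k generalizing j with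
  | zero =>
    obtain rfl : i = j := Fin.ext hij
    simp
  | succ k ih =>
    cases j using Fin.cases with
    | zero => simp at hij
    | succ j =>
      rw [pow_succ']
      exact (hs.semiconjBy_prod_castSucc_succ j).mul_left <| ih <| by
        simpa [← add_assoc] using hij

theorem semiconjBy_prod_sq_last_zero {s : Fin (n + 1) → M} (hs : IsBraidFamily s) :
    SemiconjBy ((List.ofFn s).prod ^ 2) (s (Fin.last n)) (s 0) := by
  set δ := (List.ofFn s).prod
  set x := (List.ofFn fun i : Fin n => s i.succ).prod
  set y := (List.ofFn fun i : Fin n => s i.castSucc).prod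
  have hδx : δ = s 0 * x := by simp [δ, x, List.ofFn_succ]
  have hδy : δ = y * s (Fin.last n) := by rw [← List.prod_concat, ← List.ofFn_succ']
  have hshift : δ * y = x * δ :=
    semiconjBy_list_prod_ofFn hs.semiconjBy_prod_castSucc_succ
  calc δ ^ 2 * s (Fin.last n)
      = s 0 * x * δ * s (Fin.last n) := by rw [sq, ← hδx]
    _ = s 0 * (δ * y) * s (Fin.last n) := by rw [hshift, mul_assoc (s 0)]
    _ = s 0 * δ ^ 2 := by rw [sq, mul_assoc, mul_assoc, ← hδy]

theorem commute_prod_pow {s : Fin n → M} (hs : IsBraidFamily s) (i : Fin n) :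
    Commute ((List.ofFn s).prod ^ (n + 1)) (s i) := by
  obtain _ | n := n
  · exact i.elim0
  set δ := (List.ofFn s).prod
  have to_last : SemiconjBy (δ ^ (n - i.val)) (s i) (s (Fin.last n)) :=
    hs.semiconjBy_prod_pow _ (by rw [Fin.val_last]; lia)
  have from_zero : SemiconjBy (δ ^ i.val) (s 0) (s i) := hs.semiconjBy_prod_pow _ (by simp)
  have hpow : δ ^ (n + 1 + 1) = δ ^ i.val * δ ^ 2 * δ ^ (n - i.val) := by
    rw [← pow_add, ← pow_add]
    congr 1
    lia
  rw [hpow]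
  exact (from_zero.mul_left hs.semiconjBy_prod_sq_last_zero).mul_left to_last

end IsBraidFamily

theorem stmt_3_general {G : Type*} [Group G] {n : ℕ} {s : Fin n → G} (hs : IsBraidFamily s)
    (hgen : Subgroup.closure (Set.range s) = ⊤) :
    (List.ofFn s).prod ^ (n + 1) ∈ Subgroup.center G := by
  rw [Subgroup.center_eq_iInf hgen]
  simpa only [Subgroup.mem_iInf, Set.forall_mem_range, Subgroup.mem_centralizer_singleton_iff]
    using fun i => (hs.commute_prod_pow i).eq

theorem B4.isBraidFamily_of : IsBraidFamily (PresentedGroup.of : Fin 3 → B4) where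
  braid i j hij := by
    obtain ⟨rfl, rfl⟩ | ⟨rfl, rfl⟩ : i = 0 ∧ j = 1 ∨ i = 1 ∧ j = 2 := by lia
    · exact PresentedGroup.mk_eq_mk_of_mul_inv_mem (Or.inl rfl)
    · exact PresentedGroup.mk_eq_mk_of_mul_inv_mem (Or.inr (Or.inl rfl))
  commute i j hij := by
    obtain ⟨rfl, rfl⟩ : i = 0 ∧ j = 2 := by lia
    exact PresentedGroup.mk_eq_mk_of_mul_inv_mem (Or.inr (Or.inr rfl))

/-- The element `(σ1 σ2 σ3)^4` is central in the braid group `B₄`. -/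
theorem stmt_3 :
    ((PresentedGroup.of 0 * PresentedGroup.of 1 * PresentedGroup.of 2 : B4) ^ 4) ∈
      Subgroup.center B4 := by
  simpa [List.ofFn_succ, mul_assoc] using
    stmt_3_general B4.isBraidFamily_of (PresentedGroup.closure_range_of B4rels)
end

section
/- In A(D4), the element (a1*a2*a3*b)^3 lies in the center of A(D4). -/
/-- Relations of the Artin group of type `D₄` on generators `a1 = of 0`, `a2 = of 1`,
`a3 = of 2`, `b = of 3`: the `aᵢ` pairwise commute and each `aᵢ` braids with `b`. -/
def AD4rels : Set (FreeGroup (Fin 4)) :=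
  {FreeGroup.of 0 * FreeGroup.of 1 * (FreeGroup.of 1 * FreeGroup.of 0)⁻¹,
   FreeGroup.of 0 * FreeGroup.of 2 * (FreeGroup.of 2 * FreeGroup.of 0)⁻¹,
   FreeGroup.of 1 * FreeGroup.of 2 * (FreeGroup.of 2 * FreeGroup.of 1)⁻¹,
   FreeGroup.of 0 * FreeGroup.of 3 * FreeGroup.of 0 *
      (FreeGroup.of 3 * FreeGroup.of 0 * FreeGroup.of 3)⁻¹,
   FreeGroup.of 1 * FreeGroup.of 3 * FreeGroup.of 1 *
      (FreeGroup.of 3 * FreeGroup.of 1 * FreeGroup.of 3)⁻¹,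
   FreeGroup.of 2 * FreeGroup.of 3 * FreeGroup.of 2 *
      (FreeGroup.of 3 * FreeGroup.of 2 * FreeGroup.of 3)⁻¹}

/-- The Artin group of type `D₄`, as a presented group. -/
abbrev AD4 : Type := PresentedGroup AD4rels

/-!
Fold two of the commuting generators: `w = a2 a3` satisfies `w b w b = b w b w`, so `a1`, `b`, `w`
satisfy the relations of the Artin group of type `B₃`. With `x = a1`, conjugation by the Coxeter
element `c = x w b` permutes `x`, `w b w⁻¹`, `x b x⁻¹` cyclically, so `c ^ 3` commutes with `a1`;
by symmetry it commutes with `a2` and `a3`. Finally `b = (a1 a2 a3)⁻¹ c`.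
-/

theorem braid_four_mul_of_commute {M : Type*} [Semigroup M] {y z b : M} (hyz : Commute y z)
    (hy : y * b * y = b * y * b) (hz : z * b * z = b * z * b) :
    (y * z) * b * (y * z) * b = b * (y * z) * b * (y * z) := by
  calc (y * z) * b * (y * z) * b
      = y * (z * b * z) * y * b := by rw [hyz.eq]; simp only [mul_assoc, hyz.left_comm]
    _ = y * b * z * (b * y * b) := by rw [hz]; simp only [mul_assoc]
    _ = y * b * (z * y) * b * y := by rw [← hy]; simp only [mul_assoc]
    _ = (y * b * y) * z * b * y := by rw [← hyz.eq]; simp only [mul_assoc]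
    _ = b * y * (b * z * b) * y := by rw [hy]; simp only [mul_assoc]
    _ = b * (y * z) * b * (z * y) := by rw [← hz]; simp only [mul_assoc]
    _ = b * (y * z) * b * (y * z) := by rw [hyz.eq]

section Group

variable {G : Type*} [Group G]

theorem commute_coxeter_pow_three_of_typeB {x w b : G} (hxw : Commute x w)
    (hx : x * b * x = b * x * b) (hw : w * b * w * b = b * w * b * w) :
    Commute x ((x * w * b) ^ 3) := by
  have conj_x : SemiconjBy (x * w * b) x (w * b * w⁻¹) := by
    calc x * w * b * x
        = w * (x * b * x) := by rw [hxw.eq]; simp only [mul_assoc]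
      _ = w * b * w⁻¹ * (w * x * b) := by rw [hx]; group
      _ = w * b * w⁻¹ * (x * w * b) := by rw [hxw.eq]
  have conj_wb : SemiconjBy (x * w * b) (w * b * w⁻¹) (x * b * x⁻¹) := by
    calc x * w * b * (w * b * w⁻¹)
        = x * (w * b * w * b) * w⁻¹ := by simp only [mul_assoc]
      _ = x * b * x⁻¹ * (x * w * b) := by rw [hw]; group
  have conj_xb : SemiconjBy (x * w * b) (x * b * x⁻¹) x := by
    calc x * w * b * (x * b * x⁻¹)
        = w * x * (b * x * b) * x⁻¹ := by rw [hxw.eq]; simp only [mul_assoc]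
      _ = w * x * x * b := by rw [← hx]; group
      _ = x * (x * w * b) := by simp only [mul_assoc, hxw.left_comm]
  rw [pow_three]
  exact (conj_xb.mul_left (conj_wb.mul_left conj_x) : SemiconjBy _ x x).symm

theorem commute_leaf_coxeter_pow_three_of_typeD {x y z b : G}
    (hxy : Commute x y) (hxz : Commute x z) (hyz : Commute y z)
    (hx : x * b * x = b * x * b) (hy : y * b * y = b * y * b) (hz : z * b * z = b * z * b) :
    Commute x ((x * y * z * b) ^ 3) := by
  simpa only [mul_assoc] using commute_coxeter_pow_three_of_typeB (hxy.mul_right hxz) hx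
    (braid_four_mul_of_commute hyz hy hz)

theorem coxeter_pow_three_mem_centralizer_of_typeD {x y z b : G}
    (hxy : Commute x y) (hxz : Commute x z) (hyz : Commute y z)
    (hx : x * b * x = b * x * b) (hy : y * b * y = b * y * b) (hz : z * b * z = b * z * b) :
    (x * y * z * b) ^ 3 ∈ Subgroup.centralizer {x, y, z, b} := by
  have comm_x : Commute x ((x * y * z * b) ^ 3) :=
    commute_leaf_coxeter_pow_three_of_typeD hxy hxz hyz hx hy hz
  have comm_y : Commute y ((x * y * z * b) ^ 3) := by
    rw [hxy.eq]
    exact commute_leaf_coxeter_pow_three_of_typeD hxy.symm hyz hxz hy hx hz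
  have comm_z : Commute z ((x * y * z * b) ^ 3) := by
    rw [(hxz.mul_left hyz).eq, ← mul_assoc]
    exact commute_leaf_coxeter_pow_three_of_typeD hxz.symm hyz.symm hxy hz hx hy
  have comm_b : Commute b ((x * y * z * b) ^ 3) := by
    simpa only [inv_mul_cancel_left] using
      ((comm_x.mul_left comm_y).mul_left comm_z).inv_left.mul_left
        (Commute.self_pow (x * y * z * b) 3)
  rintro g (rfl | rfl | rfl | rfl)
  exacts [comm_x, comm_y, comm_z, comm_b]

end Group

theorem presentedGroup_mem_center_iff {α : Type*} {rels : Set (FreeGroup α)}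
    {g : PresentedGroup rels} :
    g ∈ Subgroup.center (PresentedGroup rels) ↔ ∀ i, Commute (PresentedGroup.of i) g := by
  refine ⟨fun hg i ↦ Subgroup.mem_center_iff.mp hg _,
    fun hg ↦ Subgroup.mem_center_iff.mpr fun h ↦ ?_⟩
  exact Subgroup.mem_centralizer_singleton_iff.mp <|
    PresentedGroup.generated_by rels (Subgroup.centralizer {g})
      (fun i ↦ Subgroup.mem_centralizer_singleton_iff.mpr (hg i)) h

namespace AD4

theorem commute_of {i j : Fin 4} (hij : i < j) (hj : j < 3) :
    Commute (PresentedGroup.of i : AD4) (PresentedGroup.of j) := by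
  refine PresentedGroup.mk_eq_mk_of_mul_inv_mem
    (x := FreeGroup.of i * FreeGroup.of j) (y := FreeGroup.of j * FreeGroup.of i) ?_
  obtain ⟨rfl, rfl⟩ | ⟨rfl, rfl⟩ | ⟨rfl, rfl⟩ :
      i = 0 ∧ j = 1 ∨ i = 0 ∧ j = 2 ∨ i = 1 ∧ j = 2 := by omega
  all_goals simp [AD4rels]

theorem braid_of {i : Fin 4} (hi : i < 3) :
    (PresentedGroup.of i * PresentedGroup.of 3 * PresentedGroup.of i : AD4) =
      PresentedGroup.of 3 * PresentedGroup.of i * PresentedGroup.of 3 := by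
  refine PresentedGroup.mk_eq_mk_of_mul_inv_mem
    (x := FreeGroup.of i * FreeGroup.of 3 * FreeGroup.of i)
    (y := FreeGroup.of 3 * FreeGroup.of i * FreeGroup.of 3) ?_
  obtain rfl | rfl | rfl : i = 0 ∨ i = 1 ∨ i = 2 := by omega
  all_goals simp [AD4rels]

end AD4

/-- The element `(a1 a2 a3 b)^3` is central in the Artin group of type `D₄`. -/
theorem stmt_4 :
    ((PresentedGroup.of 0 * PresentedGroup.of 1 * PresentedGroup.of 2 *
        PresentedGroup.of 3 : AD4) ^ 3) ∈ Subgroup.center AD4 := by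
  have mem_centralizer := coxeter_pow_three_mem_centralizer_of_typeD
    (AD4.commute_of (i := 0) (j := 1) (by decide) (by decide))
    (AD4.commute_of (i := 0) (j := 2) (by decide) (by decide))
    (AD4.commute_of (i := 1) (j := 2) (by decide) (by decide))
    (AD4.braid_of (i := 0) (by decide))
    (AD4.braid_of (i := 1) (by decide))
    (AD4.braid_of (i := 2) (by decide))
  refine presentedGroup_mem_center_iff.mpr fun i ↦ mem_centralizer _ ?_
  fin_cases i <;> simp
end

section
/- The group G₁₃₀ is isomorphic to the direct product A(D4) × ℤ², where ℤ² is the free abelian group of rank 2. -/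
namespace G130aux
/-- Generators of the Gervais presentation of `PMod(1,3,0)`:
`b = of 0`, `a1 = of 1`, `a2 = of 2`, `a3 = of 3`,
`c12 = of 4`, `c21 = of 5`, `c13 = of 6`, `c31 = of 7`, `c23 = of 8`, `c32 = of 9`. -/
def g (i : Fin 10) : FreeGroup (Fin 10) := FreeGroup.of i
/-- The relator expressing that `x` and `y` commute. -/
def comm (x y : FreeGroup (Fin 10)) : FreeGroup (Fin 10) := x * y * (y * x)⁻¹
/-- The relator expressing the braid relation `x y x = y x y`. -/
def braid (x y : FreeGroup (Fin 10)) : FreeGroup (Fin 10) := x * y * x * (y * x * y)⁻¹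
end G130aux

open G130aux in
/-- The relations of the Gervais presentation of `PMod(1,3,0)`. -/
def G130rels : Set (FreeGroup (Fin 10)) :=
  {comm (g 1) (g 2), comm (g 1) (g 3), comm (g 2) (g 3),
   comm (g 1) (g 4), comm (g 1) (g 5), comm (g 1) (g 6), comm (g 1) (g 7), comm (g 1) (g 8),
   comm (g 2) (g 4), comm (g 2) (g 5), comm (g 2) (g 7), comm (g 2) (g 8), comm (g 2) (g 9),
   comm (g 3) (g 4), comm (g 3) (g 6), comm (g 3) (g 7), comm (g 3) (g 8), comm (g 3) (g 9),
   comm (g 0) (g 4), comm (g 0) (g 5), comm (g 0) (g 6), comm (g 0) (g 7), comm (g 0) (g 8),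
   comm (g 0) (g 9),
   comm (g 4) (g 5), comm (g 4) (g 6), comm (g 4) (g 7), comm (g 4) (g 8), comm (g 4) (g 9),
   comm (g 8) (g 5), comm (g 8) (g 6), comm (g 8) (g 7), comm (g 8) (g 9),
   comm (g 7) (g 5), comm (g 7) (g 6), comm (g 7) (g 9),
   braid (g 1) (g 0), braid (g 2) (g 0), braid (g 3) (g 0),
   g 4 * g 5 * ((g 1 * g 2 * g 0) ^ 4)⁻¹,
   g 6 * g 7 * ((g 1 * g 3 * g 0) ^ 4)⁻¹,
   g 8 * g 9 * ((g 2 * g 3 * g 0) ^ 4)⁻¹,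
   g 4 * g 8 * g 7 * ((g 1 * g 2 * g 3 * g 0) ^ 3)⁻¹}

/-- The Gervais presentation of the pure mapping class group `PMod(1,3,0)`. -/
abbrev G130 : Type := PresentedGroup G130rels

/-! Both groups represent the same functor. The star relations of `G130` express `c31`, `c21`,
`c13`, `c32` through `a1`, `a2`, `a3`, `b`, `c12`, `c23`, so a homomorphism `G130 →* G` is
determined by a family in `G` satisfying the relations of `A(D₄)` together with two elements
commuting with it and with each other. Conversely every such choice extends: the remaining
commutation relations hold because `(aᵢ aⱼ b) ^ 4` is central in the parabolic subgroup generated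
by `aᵢ`, `aⱼ`, `b`, and `(a1 a2 a3 b) ^ 3` is central in `A(D₄)`. These choices are also the
homomorphisms out of `A(D₄) × ℤ²`.

Both centrality facts are obtained by following a generator through successive conjugations by the
Coxeter element; for `D₄` this is done after folding two of the commuting generators into their
product, which reduces `D₄` to `B₃`.
-/

/-- The braid relation of length three between two elements. -/
def BraidRel {M : Type*} [Mul M] (x y : M) : Prop :=
  x * y * x = y * x * y

namespace BraidRel

variable {M : Type*} [Semigroup M] {x y : M}

protected theorem symm (h : BraidRel x y) : BraidRel y x :=
  Eq.symm h

theorem semiconjBy (h : BraidRel x y) : SemiconjBy (x * y) x y :=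
  h.trans (mul_assoc y x y)

end BraidRel

section Coxeter

variable {G : Type*} [Group G] {w x y z : G}

theorem commute_of_commute_mul (hx : Commute w x) (hxy : Commute w (x * y)) : Commute w y := by
  simpa only [inv_mul_cancel_left] using hx.inv_right.mul_right hxy

theorem semiconjBy_mul_mul_conj (hxw : Commute x w) (hxz : BraidRel x z) :
    SemiconjBy (x * w * z) x (w * z * w⁻¹) := by
  have hc : x * w * z = w * (x * z) := by rw [hxw.eq, mul_assoc]
  exact hc ▸ (SemiconjBy.conj_mk w z).mul_left hxz.semiconjBy

theorem conj_semiconjBy_mul_mul (hxw : Commute x w) (hxz : BraidRel x z) :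
    SemiconjBy (x * w * z) (x * z * x⁻¹) x := by
  have hc : x * w * z = w * (x * (z * x) * x⁻¹) := by rw [hxw.eq]; group
  have hx : SemiconjBy x⁻¹ (x * z * x⁻¹) z := (SemiconjBy.conj_mk x z).inv_symm_left
  have hxzx : SemiconjBy (x * (z * x)) z x :=
    SemiconjBy.mul_left (Commute.refl x) hxz.symm.semiconjBy
  exact hc ▸ SemiconjBy.mul_left hxw.symm (hxzx.mul_left hx)

section A3

variable (hxy : Commute x y) (hxz : BraidRel x z) (hyz : BraidRel y z)
include hxy hxz hyz

theorem semiconjBy_A3_coxeter_sq : SemiconjBy ((x * y * z) ^ 2) x y := by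
  have hy : SemiconjBy (x * y * z) (y * z * y⁻¹) y :=
    hxy.eq ▸ conj_semiconjBy_mul_mul hxy.symm hyz
  exact pow_two (x * y * z) ▸ hy.mul_left (semiconjBy_mul_mul_conj hxy hxz)

theorem commute_A3_coxeter_sq : Commute ((x * y * z) ^ 2) z := by
  have hyx : SemiconjBy ((x * y * z) ^ 2) y x :=
    hxy.eq ▸ semiconjBy_A3_coxeter_sq hxy.symm hyz hxz
  have hprod : Commute ((x * y * z) ^ 2) (x * y) := by
    have h := (semiconjBy_A3_coxeter_sq hxy hxz hyz).mul_right hyx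
    rwa [← hxy.eq] at h
  exact commute_of_commute_mul hprod ((Commute.refl (x * y * z)).pow_left 2)

theorem commute_A3_coxeter_pow_four_left : Commute x ((x * y * z) ^ 4) := by
  have hyx : SemiconjBy ((x * y * z) ^ 2) y x :=
    hxy.eq ▸ semiconjBy_A3_coxeter_sq hxy.symm hyz hxz
  have hsq := hyx.mul_left (semiconjBy_A3_coxeter_sq hxy hxz hyz)
  rw [← pow_add] at hsq
  exact Commute.symm hsq

theorem commute_A3_coxeter_pow_four_right : Commute y ((x * y * z) ^ 4) :=
  hxy.eq ▸ commute_A3_coxeter_pow_four_left hxy.symm hyz hxz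

theorem commute_A3_coxeter_pow_four_mid : Commute z ((x * y * z) ^ 4) := by
  have h := (commute_A3_coxeter_sq hxy hxz hyz).pow_left 2
  rw [← pow_mul] at h
  exact h.symm

end A3

-- Conjugation by `x * w * z` permutes `x`, `w * z * w⁻¹`, `x * z * x⁻¹` cyclically; `hwz` is the
-- length-four braid relation between `w` and `z`.
theorem commute_B3_coxeter_pow_three (hxw : Commute x w) (hxz : BraidRel x z)
    (hwz : Commute z (w * z * w)) : Commute x ((x * w * z) ^ 3) := by
  have hmid : SemiconjBy (x * w * z) (w * z * w⁻¹) (x * z * x⁻¹) := by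
    have hc : x * w * z = x * (w * z * w * w⁻¹) := by group
    have hw : SemiconjBy w⁻¹ (w * z * w⁻¹) z := (SemiconjBy.conj_mk w z).inv_symm_left
    exact hc ▸ (SemiconjBy.conj_mk x z).mul_left (SemiconjBy.mul_left hwz.symm hw)
  have hcube := (conj_semiconjBy_mul_mul hxw hxz).mul_left
    (hmid.mul_left (semiconjBy_mul_mul_conj hxw hxz))
  rw [← pow_two, ← pow_succ'] at hcube
  exact Commute.symm hcube

end Coxeter

/-- The relations of the Artin group of type `D₄`: the `a i` commute pairwise and each of them
braids with `b`. -/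
structure IsD4Family {M : Type*} [Mul M] (a : Fin 3 → M) (b : M) : Prop where
  commute : ∀ i j, Commute (a i) (a j)
  braid : ∀ i, BraidRel (a i) b

/-- A family satisfying the relations of the Artin group of type `D₄`, together with elements `z k`
commuting with it and with each other. Such data are the homomorphisms out of the product of
`A(D₄)` with a free abelian group. -/
structure IsD4CentralFamily {M κ : Type*} [Mul M] (a : Fin 3 → M) (b : M) (z : κ → M) : Prop
    extends IsD4Family a b where
  commute_left : ∀ i k, Commute (a i) (z k)
  commute_mid : ∀ k, Commute b (z k)
  commute_central : ∀ k l, Commute (z k) (z l)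

namespace IsD4Family

variable {G : Type*} [Group G] {a : Fin 3 → G} {b : G}

theorem commute_left_mul_mul_mul_pow_three (h : IsD4Family a b) (i j k : Fin 3) :
    Commute (a i) ((a i * a j * a k * b) ^ 3) := by
  have hsq := commute_A3_coxeter_sq (h.commute j k) (h.braid j) (h.braid k)
  have hfold : Commute b (a j * a k * b * (a j * a k)) := by
    have hmul := hsq.symm.mul_right (Commute.refl b).inv_right
    rwa [pow_two, ← mul_assoc, mul_inv_cancel_right] at hmul
  have hcube := commute_B3_coxeter_pow_three ((h.commute i j).mul_right (h.commute i k))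
    (h.braid i) hfold
  rwa [← mul_assoc] at hcube

theorem commute_left_coxeter_pow_three (h : IsD4Family a b) (i : Fin 3) :
    Commute (a i) ((a 0 * a 1 * a 2 * b) ^ 3) := by
  have h102 : a 1 * a 0 * a 2 = a 0 * a 1 * a 2 := by rw [(h.commute 1 0).eq]
  have h201 : a 2 * a 0 * a 1 = a 0 * a 1 * a 2 := by
    rw [mul_assoc, ((h.commute 2 0).mul_right (h.commute 2 1)).eq]
  fin_cases i
  · exact h.commute_left_mul_mul_mul_pow_three 0 1 2
  · exact h102 ▸ h.commute_left_mul_mul_mul_pow_three 1 0 2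
  · exact h201 ▸ h.commute_left_mul_mul_mul_pow_three 2 0 1

theorem commute_mid_coxeter_pow_three (h : IsD4Family a b) :
    Commute b ((a 0 * a 1 * a 2 * b) ^ 3) := by
  have ha := fun i ↦ (h.commute_left_coxeter_pow_three i).symm
  exact (commute_of_commute_mul (((ha 0).mul_right (ha 1)).mul_right (ha 2))
    ((Commute.refl (a 0 * a 1 * a 2 * b)).pow_left 3)).symm

end IsD4Family

section PresentedGroup

variable {α : Type*} {rels : Set (FreeGroup α)} {i j : α}

theorem commute_of_mem_rels
    (h : FreeGroup.of i * FreeGroup.of j * (FreeGroup.of j * FreeGroup.of i)⁻¹ ∈ rels) :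
    Commute (PresentedGroup.of i : PresentedGroup rels) (.of j) :=
  PresentedGroup.mk_eq_mk_of_mul_inv_mem h

theorem braidRel_of_mem_rels
    (h : FreeGroup.of i * FreeGroup.of j * FreeGroup.of i *
      (FreeGroup.of j * FreeGroup.of i * FreeGroup.of j)⁻¹ ∈ rels) :
    BraidRel (PresentedGroup.of i : PresentedGroup rels) (.of j) :=
  PresentedGroup.mk_eq_mk_of_mul_inv_mem h

end PresentedGroup

namespace AD4

/-- The generators `a1`, `a2`, `a3` of `A(D₄)`. -/
def a : Fin 3 → AD4 := ![.of 0, .of 1, .of 2]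

/-- The generator `b` of `A(D₄)`. -/
def b : AD4 := .of 3

theorem isD4Family : IsD4Family a b where
  commute i j := by
    have h01 : Commute (a 0) (a 1) := commute_of_mem_rels (by simp [AD4rels])
    have h02 : Commute (a 0) (a 2) := commute_of_mem_rels (by simp [AD4rels])
    have h12 : Commute (a 1) (a 2) := commute_of_mem_rels (by simp [AD4rels])
    fin_cases i <;> fin_cases j
    exacts [.refl _, h01, h02, h01.symm, .refl _, h12, h02.symm, h12.symm, .refl _]
  braid i := by
    fin_cases i
    exacts [braidRel_of_mem_rels (i := 0) (j := 3) (by simp [AD4rels]),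
      braidRel_of_mem_rels (i := 1) (j := 3) (by simp [AD4rels]),
      braidRel_of_mem_rels (i := 2) (j := 3) (by simp [AD4rels])]

theorem mem_of_generators_mem {H : Subgroup AD4} (ha : ∀ i, a i ∈ H) (hb : b ∈ H) (x : AD4) :
    x ∈ H := by
  refine PresentedGroup.generated_by _ H (fun i ↦ ?_) x
  fin_cases i
  exacts [ha 0, ha 1, ha 2, hb]

variable {G κ : Type*} [Group G] {x : Fin 3 → G} {y : G} {z : κ → G}

/-- The homomorphism out of `A(D₄)` determined by a family satisfying its relations. -/
def lift (h : IsD4Family x y) : AD4 →* G :=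
  PresentedGroup.toGroup (f := ![x 0, x 1, x 2, y]) <| by
    simp only [AD4rels, Set.mem_insert_iff, Set.mem_singleton_iff, forall_eq_or_imp, forall_eq,
      map_mul, map_inv, FreeGroup.lift_apply_of, mul_inv_eq_one]
    exact ⟨h.commute 0 1, h.commute 0 2, h.commute 1 2, h.braid 0, h.braid 1, h.braid 2⟩

@[simp]
theorem lift_a (h : IsD4Family x y) (i : Fin 3) : lift h (a i) = x i := by
  fin_cases i <;> exact PresentedGroup.toGroup.of _

@[simp]
theorem lift_b (h : IsD4Family x y) : lift h b = y :=
  PresentedGroup.toGroup.of _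

theorem commute_lift (h : IsD4CentralFamily x y z) (g : AD4) (k : κ) :
    Commute (lift h.toIsD4Family g) (z k) := by
  have hg : g ∈ (Subgroup.centralizer {z k}).comap (lift h.toIsD4Family) := by
    apply mem_of_generators_mem <;>
      simp only [Subgroup.mem_comap, Subgroup.mem_centralizer_singleton_iff, lift_a, lift_b]
    exacts [fun i ↦ h.commute_left i k, h.commute_mid k]
  exact Subgroup.mem_centralizer_singleton_iff.1 hg

end AD4

section FreeAbelian

variable {G κ : Type*} [Group G] {z : κ → G}

section Lift

variable [Fintype κ]

/-- The homomorphism out of the free abelian group on `κ` determined by a commuting family. -/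
def freeAbelianLift (hz : ∀ k l, Commute (z k) (z l)) : Multiplicative (κ → ℤ) →* G :=
  (MonoidHom.noncommPiCoprod (fun k ↦ zpowersHom G (z k))
    fun k l _ m n ↦ (hz k l).zpow_zpow m.toAdd n.toAdd).comp
      (MulEquiv.funMultiplicative κ ℤ).toMonoidHom

@[simp]
theorem freeAbelianLift_ofAdd_single [DecidableEq κ] (hz : ∀ k l, Commute (z k) (z l)) (k : κ) :
    freeAbelianLift hz (.ofAdd (Pi.single k 1)) = z k := by
  have hsingle : MulEquiv.funMultiplicative κ ℤ (.ofAdd (Pi.single k 1)) =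
      Pi.mulSingle k (.ofAdd 1) := rfl
  simpa [freeAbelianLift, hsingle] using
    MonoidHom.noncommPiCoprod_mulSingle (fun k ↦ zpowersHom G (z k)) k (.ofAdd 1)

theorem commute_freeAbelianLift (hz : ∀ k l, Commute (z k) (z l)) {x : G}
    (hx : ∀ k, Commute x (z k)) (n : Multiplicative (κ → ℤ)) :
    Commute x (freeAbelianLift hz n) :=
  MonoidHom.commute_noncommPiCoprod (hcomm := fun k l _ m n ↦ (hz k l).zpow_zpow m.toAdd n.toAdd)
    _ (fun k m ↦ (hx k).zpow_right m.toAdd) _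

end Lift

theorem freeAbelian_hom_ext [Finite κ] [DecidableEq κ] {φ ψ : Multiplicative (κ → ℤ) →* G}
    (h : ∀ k, φ (.ofAdd (Pi.single k 1)) = ψ (.ofAdd (Pi.single k 1))) : φ = ψ := by
  have hcomp : φ.comp (MulEquiv.funMultiplicative κ ℤ).symm.toMonoidHom =
      ψ.comp (MulEquiv.funMultiplicative κ ℤ).symm.toMonoidHom :=
    MonoidHom.pi_ext fun k ↦ DFunLike.congr_fun (F := Multiplicative ℤ →* G)
      (f := (φ.comp _).comp (.mulSingle (fun _ ↦ Multiplicative ℤ) k))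
      (g := (ψ.comp _).comp (.mulSingle (fun _ ↦ Multiplicative ℤ) k)) (MonoidHom.ext_mint (h k))
  exact MonoidHom.ext fun n ↦ DFunLike.congr_fun hcomp (MulEquiv.funMultiplicative κ ℤ n)

end FreeAbelian

namespace AD4

variable {G κ : Type*} [Group G] {x : Fin 3 → G} {y : G} {z : κ → G}

theorem isD4CentralFamily [DecidableEq κ] :
    IsD4CentralFamily (fun i ↦ (a i, 1)) (b, 1)
      fun k : κ ↦ ((1, .ofAdd (Pi.single k 1)) : AD4 × Multiplicative (κ → ℤ)) where
  commute i j := (isD4Family.commute i j).prod (.refl 1)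
  braid i := Prod.ext (isD4Family.braid i) rfl
  commute_left _ _ := (Commute.one_right _).prod (.one_left _)
  commute_mid _ := (Commute.one_right _).prod (.one_left _)
  commute_central _ _ := (Commute.one_left _).prod (.all _ _)

/-- The homomorphism out of `A(D₄) × ℤ^κ` determined by a family satisfying the relations of
`A(D₄)` and by commuting elements that commute with the family. -/
def liftProd [Fintype κ] (h : IsD4CentralFamily x y z) : AD4 × Multiplicative (κ → ℤ) →* G :=
  (lift h.toIsD4Family).noncommCoprod (freeAbelianLift h.commute_central)
    fun g ↦ commute_freeAbelianLift _ (commute_lift h g)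

@[simp]
theorem liftProd_a [Fintype κ] (h : IsD4CentralFamily x y z) (i : Fin 3) :
    liftProd h (a i, 1) = x i := by
  simp [liftProd]

@[simp]
theorem liftProd_b [Fintype κ] (h : IsD4CentralFamily x y z) : liftProd h (b, 1) = y := by
  simp [liftProd]

@[simp]
theorem liftProd_central [DecidableEq κ] [Fintype κ] (h : IsD4CentralFamily x y z) (k : κ) :
    liftProd h (1, .ofAdd (Pi.single k 1)) = z k := by
  simp [liftProd]

theorem prod_hom_ext [Finite κ] [DecidableEq κ] {φ ψ : AD4 × Multiplicative (κ → ℤ) →* G}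
    (ha : ∀ i, φ (a i, 1) = ψ (a i, 1)) (hb : φ (b, 1) = ψ (b, 1))
    (hz : ∀ k, φ (1, .ofAdd (Pi.single k 1)) = ψ (1, .ofAdd (Pi.single k 1))) : φ = ψ := by
  have hinl : φ.comp (.inl _ _) = ψ.comp (.inl _ _) :=
    MonoidHom.ext <| mem_of_generators_mem
      (H := (φ.comp (.inl _ _)).eqLocus (ψ.comp (.inl _ _))) ha hb
  have hinr : φ.comp (.inr _ _) = ψ.comp (.inr _ _) := freeAbelian_hom_ext hz
  rw [← MonoidHom.noncommCoprod_unique φ, ← MonoidHom.noncommCoprod_unique ψ]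
  simp only [hinl, hinr]

end AD4

namespace G130

/-- The generators `a1`, `a2`, `a3` of `G₁₃₀`. -/
def a : Fin 3 → G130 := ![.of 1, .of 2, .of 3]

/-- The generator `b` of `G₁₃₀`. -/
def b : G130 := .of 0

/-- The generators `c12` and `c23` of `G₁₃₀`, which generate the factor `ℤ²`. -/
def c : Fin 2 → G130 := ![.of 4, .of 8]

open G130aux in
theorem commute_of_comm_mem {i j : Fin 10} (h : comm (g i) (g j) ∈ G130rels) :
    Commute (.of i : G130) (.of j) :=
  commute_of_mem_rels h

open G130aux in
theorem braidRel_of_braid_mem {i j : Fin 10} (h : braid (g i) (g j) ∈ G130rels) :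
    BraidRel (.of i : G130) (.of j) :=
  braidRel_of_mem_rels h

theorem isD4Family : IsD4Family a b where
  commute i j := by
    have h01 : Commute (a 0) (a 1) := commute_of_comm_mem (i := 1) (j := 2) (by simp [G130rels])
    have h02 : Commute (a 0) (a 2) := commute_of_comm_mem (i := 1) (j := 3) (by simp [G130rels])
    have h12 : Commute (a 1) (a 2) := commute_of_comm_mem (i := 2) (j := 3) (by simp [G130rels])
    fin_cases i <;> fin_cases j
    exacts [.refl _, h01, h02, h01.symm, .refl _, h12, h02.symm, h12.symm, .refl _]
  braid i := by
    fin_cases i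
    exacts [braidRel_of_braid_mem (i := 1) (j := 0) (by simp [G130rels]),
      braidRel_of_braid_mem (i := 2) (j := 0) (by simp [G130rels]),
      braidRel_of_braid_mem (i := 3) (j := 0) (by simp [G130rels])]

theorem isD4CentralFamily : IsD4CentralFamily a b c where
  toIsD4Family := isD4Family
  commute_left i k := by
    fin_cases i <;> fin_cases k
    exacts [commute_of_comm_mem (i := 1) (j := 4) (by simp [G130rels]),
      commute_of_comm_mem (i := 1) (j := 8) (by simp [G130rels]),
      commute_of_comm_mem (i := 2) (j := 4) (by simp [G130rels]),
      commute_of_comm_mem (i := 2) (j := 8) (by simp [G130rels]),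
      commute_of_comm_mem (i := 3) (j := 4) (by simp [G130rels]),
      commute_of_comm_mem (i := 3) (j := 8) (by simp [G130rels])]
  commute_mid k := by
    fin_cases k
    exacts [commute_of_comm_mem (i := 0) (j := 4) (by simp [G130rels]),
      commute_of_comm_mem (i := 0) (j := 8) (by simp [G130rels])]
  commute_central k l := by
    have h01 : Commute (c 0) (c 1) := commute_of_comm_mem (i := 4) (j := 8) (by simp [G130rels])
    fin_cases k <;> fin_cases l
    exacts [.refl _, h01, h01.symm, .refl _]

section Star

open G130aux

theorem star_12 : (.of 4 * .of 5 : G130) = (a 0 * a 1 * b) ^ 4 :=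
  PresentedGroup.mk_eq_mk_of_mul_inv_mem (x := g 4 * g 5) (y := (g 1 * g 2 * g 0) ^ 4)
    (by simp [G130rels])

theorem star_13 : (.of 6 * .of 7 : G130) = (a 0 * a 2 * b) ^ 4 :=
  PresentedGroup.mk_eq_mk_of_mul_inv_mem (x := g 6 * g 7) (y := (g 1 * g 3 * g 0) ^ 4)
    (by simp [G130rels])

theorem star_23 : (.of 8 * .of 9 : G130) = (a 1 * a 2 * b) ^ 4 :=
  PresentedGroup.mk_eq_mk_of_mul_inv_mem (x := g 8 * g 9) (y := (g 2 * g 3 * g 0) ^ 4)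
    (by simp [G130rels])

theorem star_123 : (.of 4 * .of 8 * .of 7 : G130) = (a 0 * a 1 * a 2 * b) ^ 3 :=
  PresentedGroup.mk_eq_mk_of_mul_inv_mem (x := g 4 * g 8 * g 7)
    (y := (g 1 * g 2 * g 3 * g 0) ^ 3) (by simp [G130rels])

end Star

theorem mem_of_generators_mem {H : Subgroup G130} (ha : ∀ i, a i ∈ H) (hb : b ∈ H)
    (hc : ∀ k, c k ∈ H) (x : G130) : x ∈ H := by
  have hpow (i j : Fin 3) : (a i * a j * b) ^ 4 ∈ H :=
    H.pow_mem (H.mul_mem (H.mul_mem (ha i) (ha j)) hb) 4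
  have h21 : .of 5 ∈ H := (H.mul_mem_cancel_left (hc 0)).1 (star_12 ▸ hpow 0 1)
  have h32 : .of 9 ∈ H := (H.mul_mem_cancel_left (hc 1)).1 (star_23 ▸ hpow 1 2)
  have h31 : .of 7 ∈ H :=
    (H.mul_mem_cancel_left (H.mul_mem (hc 0) (hc 1))).1 <| star_123 ▸
      H.pow_mem (H.mul_mem (H.mul_mem (H.mul_mem (ha 0) (ha 1)) (ha 2)) hb) 3
  have h13 : .of 6 ∈ H := (H.mul_mem_cancel_right h31).1 (star_13 ▸ hpow 0 2)
  refine PresentedGroup.generated_by _ H (fun i ↦ ?_) x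
  fin_cases i
  exacts [hb, ha 0, ha 1, ha 2, hc 0, h21, h13, h31, hc 1, h32]

variable {G : Type*} [Group G] {x : Fin 3 → G} {y : G} {z : Fin 2 → G}

theorem hom_ext {φ ψ : G130 →* G} (ha : ∀ i, φ (a i) = ψ (a i)) (hb : φ b = ψ b)
    (hc : ∀ k, φ (c k) = ψ (c k)) : φ = ψ :=
  MonoidHom.ext <| mem_of_generators_mem (H := φ.eqLocus ψ) ha hb hc

/-- The image of `c31` forced by the relation `c12 c23 c31 = (a1 a2 a3 b) ^ 3`. -/
def image31 (x : Fin 3 → G) (y : G) (z : Fin 2 → G) : G :=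
  (z 0 * z 1)⁻¹ * (x 0 * x 1 * x 2 * y) ^ 3

/-- The images of the ten generators of `G₁₃₀` forced by those of `a1`, `a2`, `a3`, `b`, `c12`,
`c23` through the star relations. -/
def images (x : Fin 3 → G) (y : G) (z : Fin 2 → G) : Fin 10 → G :=
  ![y, x 0, x 1, x 2,
    z 0, (z 0)⁻¹ * (x 0 * x 1 * y) ^ 4,
    (x 0 * x 2 * y) ^ 4 * (image31 x y z)⁻¹, image31 x y z,
    z 1, (z 1)⁻¹ * (x 1 * x 2 * y) ^ 4]

theorem commute_images {g : G} (ha : ∀ i, Commute g (x i)) (hb : Commute g y)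
    (hz : ∀ k, Commute g (z k)) (i : Fin 10) : Commute g (images x y z i) := by
  have hpow (i j : Fin 3) : Commute g ((x i * x j * y) ^ 4) :=
    (((ha i).mul_right (ha j)).mul_right hb).pow_right 4
  have h31 : Commute g (image31 x y z) :=
    ((hz 0).mul_right (hz 1)).inv_right.mul_right <|
      ((((ha 0).mul_right (ha 1)).mul_right (ha 2)).mul_right hb).pow_right 3
  fin_cases i
  exacts [hb, ha 0, ha 1, ha 2, hz 0, (hz 0).inv_right.mul_right (hpow 0 1),
    (hpow 0 2).mul_right h31.inv_right, h31, hz 1, (hz 1).inv_right.mul_right (hpow 1 2)]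

theorem commute_central_images (h : IsD4CentralFamily x y z) (k : Fin 2) (i : Fin 10) :
    Commute (z k) (images x y z i) :=
  commute_images (fun i ↦ (h.commute_left i k).symm) (h.commute_mid k).symm
    (h.commute_central k) i

theorem commute_image31_images (h : IsD4CentralFamily x y z) (i : Fin 10) :
    Commute (image31 x y z) (images x y z i) := by
  have hz (k : Fin 2) := commute_central_images h k i
  have hcube : Commute ((x 0 * x 1 * x 2 * y) ^ 3) (images x y z i) :=
    commute_images (fun i ↦ (h.commute_left_coxeter_pow_three i).symm)
      h.commute_mid_coxeter_pow_three.symm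
      (fun k ↦ ((((h.commute_left 0 k).mul_left (h.commute_left 1 k)).mul_left
        (h.commute_left 2 k)).mul_left (h.commute_mid k)).pow_left 3) i
  exact ((hz 0).mul_left (hz 1)).inv_left.mul_left hcube

theorem lift_images_eq_one (h : IsD4CentralFamily x y z) :
    ∀ r ∈ G130rels, FreeGroup.lift (images x y z) r = 1 := by
  have h12 := commute_central_images h 0
  have h23 := commute_central_images h 1
  have h31 := commute_image31_images h
  have hl (i j : Fin 3) :=
    commute_A3_coxeter_pow_four_left (h.commute i j) (h.braid i) (h.braid j)
  have hr (i j : Fin 3) :=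
    commute_A3_coxeter_pow_four_right (h.commute i j) (h.braid i) (h.braid j)
  have hm (i j : Fin 3) :=
    commute_A3_coxeter_pow_four_mid (h.commute i j) (h.braid i) (h.braid j)
  simp only [G130rels, G130aux.comm, G130aux.braid, G130aux.g, Set.mem_insert_iff,
    Set.mem_singleton_iff, forall_eq_or_imp, forall_eq, map_mul, map_inv, map_pow,
    FreeGroup.lift_apply_of, mul_inv_eq_one]
  exact ⟨h.commute 0 1, h.commute 0 2, h.commute 1 2,
    (h12 1).symm, (h12 1).symm.inv_right.mul_right (hl 0 1),
    (hl 0 2).mul_right (h31 1).symm.inv_right, (h31 1).symm, (h23 1).symm,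
    (h12 2).symm, (h12 2).symm.inv_right.mul_right (hr 0 1), (h31 2).symm, (h23 2).symm,
    (h23 2).symm.inv_right.mul_right (hl 1 2),
    (h12 3).symm, (hr 0 2).mul_right (h31 3).symm.inv_right, (h31 3).symm, (h23 3).symm,
    (h23 3).symm.inv_right.mul_right (hr 1 2),
    (h12 0).symm, (h12 0).symm.inv_right.mul_right (hm 0 1),
    (hm 0 2).mul_right (h31 0).symm.inv_right, (h31 0).symm, (h23 0).symm,
    (h23 0).symm.inv_right.mul_right (hm 1 2),
    h12 5, h12 6, h12 7, h12 8, h12 9, h23 5, h23 6, h23 7, h23 9, h31 5, h31 6, h31 9,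
    h.braid 0, h.braid 1, h.braid 2,
    mul_inv_cancel_left _ _, inv_mul_cancel_right _ _, mul_inv_cancel_left _ _,
    mul_inv_cancel_left _ _⟩

/-- The homomorphism out of `G₁₃₀` determined by the images of `a1`, `a2`, `a3`, `b`, `c12` and
`c23`. -/
def lift (h : IsD4CentralFamily x y z) : G130 →* G :=
  PresentedGroup.toGroup (lift_images_eq_one h)

@[simp]
theorem lift_a (h : IsD4CentralFamily x y z) (i : Fin 3) : lift h (a i) = x i := by
  fin_cases i <;> exact PresentedGroup.toGroup.of _

@[simp]
theorem lift_b (h : IsD4CentralFamily x y z) : lift h b = y :=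
  PresentedGroup.toGroup.of _

@[simp]
theorem lift_c (h : IsD4CentralFamily x y z) (k : Fin 2) : lift h (c k) = z k := by
  fin_cases k <;> exact PresentedGroup.toGroup.of _

end G130

/-- Proposition 8: `PMod(1,3,0)`, given by the Gervais presentation, is isomorphic to
`A(D₄) × ℤ²`. -/
theorem stmt_5 : Nonempty (G130 ≃* AD4 × Multiplicative (Fin 2 → ℤ)) := by
  refine ⟨(G130.lift AD4.isD4CentralFamily).toMulEquiv (AD4.liftProd G130.isD4CentralFamily) ?_ ?_⟩
  · apply G130.hom_ext <;> simp
  · apply AD4.prod_hom_ext <;> simp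
end

section
/- The group homomorphism from the free abelian group ℤ³ to G₁₃₀ sending the three standard basis elements to c12, c23, c31 (well defined since these three elements of G₁₃₀ pairwise commute) is injective; in particular c12, c23, c31 generate a free abelian subgroup of G₁₃₀ of rank 3. -/
/-- The standard basis of the free abelian group `ℤ³` (written multiplicatively). -/
def u (i : Fin 3) : Multiplicative (Fin 3 → ℤ) := Multiplicative.ofAdd (Pi.single i 1)

/-!
Once commutativity is imposed, the braid relations identify `b`, `a₁`, `a₂`, `a₃` with a single
element `s`, and the star relations leave only `c₁₂ c₂₃ c₃₁ = s ^ 12`, the remaining `c_{ij}` being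
determined by `c_{ij} c_{ji} = s ^ 12`. In `ℤ³` one may therefore take `s = e₁ + e₂ + e₃` and send
`c₁₂, c₂₃, c₃₁` to `12 e₁, 12 e₂, 12 e₃`. Composing `ℤ³ → G₁₃₀ → ℤ³` gives multiplication by `12`,
which is injective.
-/

section CommutingFamily

variable {ι : Type*} {G : Type*} [Group G]

/-- The homomorphism from the free abelian group on `ι`, written multiplicatively, that sends the
basis vectors to the members of a pairwise commuting family `c`. -/
def zpowPiHom [Fintype ι] (c : ι → G) (hc : Pairwise fun i j => Commute (c i) (c j)) :
    Multiplicative (ι → ℤ) →* G :=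
  (MonoidHom.noncommPiCoprod (fun i => zpowersHom G (c i))
    fun _ _ hij m n => (hc hij).zpow_zpow m.toAdd n.toAdd).comp
      (MulEquiv.piMultiplicative fun _ : ι => ℤ).toMonoidHom

variable [DecidableEq ι]

theorem zpowPiHom_ofAdd_single [Fintype ι] (c : ι → G)
    (hc : Pairwise fun i j => Commute (c i) (c j)) (i : ι) :
    zpowPiHom c hc (Multiplicative.ofAdd (Pi.single i 1)) = c i := by
  rw [zpowPiHom, MonoidHom.comp_apply]
  exact (MonoidHom.noncommPiCoprod_mulSingle _ i _).trans (zpow_one (c i))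

theorem monoidHom_ext_ofAdd_single [Finite ι] {M : Type*} [Monoid M]
    {φ ψ : Multiplicative (ι → ℤ) →* M}
    (h : ∀ i, φ (Multiplicative.ofAdd (Pi.single i 1)) =
      ψ (Multiplicative.ofAdd (Pi.single i 1))) : φ = ψ := by
  let e := MulEquiv.piMultiplicative fun _ : ι => ℤ
  let incl (i : ι) : Multiplicative ℤ →* ι → Multiplicative ℤ :=
    MonoidHom.mulSingle (fun _ => Multiplicative ℤ) i
  have hincl (i : ι) : (φ.comp e.symm.toMonoidHom).comp (incl i) =
      (ψ.comp e.symm.toMonoidHom).comp (incl i) := MonoidHom.ext_mint (h i)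
  have hcomp : φ.comp e.symm.toMonoidHom = ψ.comp e.symm.toMonoidHom :=
    MonoidHom.pi_ext fun i => DFunLike.congr_fun (hincl i)
  exact (MonoidHom.cancel_right e.symm.surjective).mp hcomp

theorem zpowPiHom_injective_of_map_eq_pow [Fintype ι] (c : ι → G)
    (hc : Pairwise fun i j => Commute (c i) (c j))
    (ψ : G →* Multiplicative (ι → ℤ)) {n : ℕ} (hn : n ≠ 0)
    (hψ : ∀ i, ψ (c i) = Multiplicative.ofAdd (Pi.single i 1) ^ n) :
    Function.Injective (zpowPiHom c hc) := by
  have hcomp : ψ.comp (zpowPiHom c hc) = powMonoidHom n :=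
    monoidHom_ext_ofAdd_single fun i => by
      rw [MonoidHom.comp_apply, zpowPiHom_ofAdd_single, hψ, powMonoidHom_apply]
  have hpow : Function.Injective (ψ ∘ zpowPiHom c hc) := by
    rw [← MonoidHom.coe_comp, hcomp]
    exact pow_left_injective hn
  exact hpow.of_comp

end CommutingFamily

namespace G130aux

theorem commute_mk_of_comm_mem {rels : Set (FreeGroup (Fin 10))} {x y : FreeGroup (Fin 10)}
    (h : comm x y ∈ rels) :
    Commute (PresentedGroup.mk rels x) (PresentedGroup.mk rels y) := by
  have hxy := PresentedGroup.one_of_mem h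
  rwa [comm, map_mul, map_inv, mul_inv_eq_one, map_mul, map_mul] at hxy

variable {A : Type*} [CommGroup A]

theorem map_comm_eq_one (φ : FreeGroup (Fin 10) →* A) (x y : FreeGroup (Fin 10)) :
    φ (comm x y) = 1 := by
  rw [comm, map_mul, map_inv, mul_inv_eq_one, map_mul, map_mul, mul_comm]

theorem map_braid_eq_div (φ : FreeGroup (Fin 10) →* A) (x y : FreeGroup (Fin 10)) :
    φ (braid x y) = φ x / φ y := by
  rw [braid, ← div_eq_mul_inv, map_div, map_mul, map_mul, map_mul, map_mul, mul_assoc,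
    mul_comm (φ y * φ x), mul_div_mul_right_eq_div]

end G130aux

namespace G130

open G130aux

/-- The elements `c₁₂, c₂₃, c₃₁`, in the order in which they occur in the last star relation. -/
def cyclicBoundary : Fin 3 → G130 :=
  ![PresentedGroup.of 4, PresentedGroup.of 8, PresentedGroup.of 7]

theorem pairwise_commute_cyclicBoundary :
    Pairwise fun i j => Commute (cyclicBoundary i) (cyclicBoundary j) := by
  have h₁₂_₂₃ : Commute (cyclicBoundary 0) (cyclicBoundary 1) :=
    commute_mk_of_comm_mem (x := g 4) (y := g 8) (by simp [G130rels])
  have h₁₂_₃₁ : Commute (cyclicBoundary 0) (cyclicBoundary 2) :=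
    commute_mk_of_comm_mem (x := g 4) (y := g 7) (by simp [G130rels])
  have h₂₃_₃₁ : Commute (cyclicBoundary 1) (cyclicBoundary 2) :=
    commute_mk_of_comm_mem (x := g 8) (y := g 7) (by simp [G130rels])
  have : Std.Symm fun i j => Commute (cyclicBoundary i) (cyclicBoundary j) :=
    ⟨fun _ _ => Commute.symm⟩
  refine pairwise_iff_lt.mpr fun i j hij => ?_
  fin_cases i <;> fin_cases j <;> first | assumption | simp at hij

variable {A : Type*} [CommGroup A]

/-- The images of the ten generators under a homomorphism to a commutative group, in terms of the
common image `s` of `b, a₁, a₂, a₃` and the images `x, y, z` of `c₁₂, c₂₃, c₃₁`. The images of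
`c₂₁, c₁₃, c₃₂` are forced by `c_{ij} c_{ji} = s ^ 12 = x y z`. -/
def commImage (s x y z : A) : Fin 10 → A :=
  ![s, s, s, s, x, y * z, x * y, z, y, x * z]

theorem lift_commImage_eq_one {s x y z : A} (h : x * y * z = s ^ 12) :
    ∀ r ∈ G130rels, FreeGroup.lift (commImage s x y z) r = 1 := by
  have h₁₃ : x * y * z = (s * s * s) ^ 4 := by
    rw [h]
    simp only [mul_pow, ← pow_add, Nat.reduceAdd]
  have h₁₂ : x * (y * z) = (s * s * s) ^ 4 := by rw [← mul_assoc, h₁₃]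
  have h₂₃ : y * (x * z) = (s * s * s) ^ 4 := by rw [mul_left_comm, h₁₂]
  have h₁₂₃ : x * y * z = (s * s * s * s) ^ 3 := by
    rw [h]
    simp only [mul_pow, ← pow_add, Nat.reduceAdd]
  simp only [G130rels, g, Set.mem_insert_iff, Set.mem_singleton_iff, forall_eq_or_imp,
    forall_eq, map_comm_eq_one, map_braid_eq_div, map_mul, map_inv, map_pow,
    FreeGroup.lift_apply_of, mul_inv_eq_one, true_and]
  exact ⟨div_self' s, div_self' s, div_self' s, h₁₂, h₁₃, h₂₃, h₁₂₃⟩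

/-- The homomorphism from `G130` to a commutative group given by a solution `(s, x, y, z)` of
`x y z = s ^ 12`, the relation to which the presentation reduces after abelianization. -/
def toCommGroup (s x y z : A) (h : x * y * z = s ^ 12) : G130 →* A :=
  PresentedGroup.toGroup (lift_commImage_eq_one h)

theorem toCommGroup_cyclicBoundary (s x y z : A) (h : x * y * z = s ^ 12) (i : Fin 3) :
    toCommGroup s x y z h (cyclicBoundary i) = ![x, y, z] i := by
  fin_cases i <;> exact PresentedGroup.toGroup.of (lift_commImage_eq_one h)

end G130

/-- Proposition 8 (second part): the homomorphism `ℤ³ → PMod(1,3,0)` sending the standard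
basis elements to `c12, c23, c31` is injective, i.e. `c12, c23, c31` generate a free abelian
subgroup of rank 3. -/
theorem stmt_8 :
    ∃ f : Multiplicative (Fin 3 → ℤ) →* G130,
      f (u 0) = PresentedGroup.of 4 ∧
      f (u 1) = PresentedGroup.of 8 ∧
      f (u 2) = PresentedGroup.of 7 ∧
      Function.Injective f := by
  let ψ : G130 →* Multiplicative (Fin 3 → ℤ) :=
    G130.toCommGroup (u 0 * u 1 * u 2) (u 0 ^ 12) (u 1 ^ 12) (u 2 ^ 12) (by simp only [mul_pow])
  refine ⟨zpowPiHom G130.cyclicBoundary G130.pairwise_commute_cyclicBoundary,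
    zpowPiHom_ofAdd_single _ _ 0, zpowPiHom_ofAdd_single _ _ 1, zpowPiHom_ofAdd_single _ _ 2,
    zpowPiHom_injective_of_map_eq_pow _ _ ψ (n := 12) (by norm_num) fun i => ?_⟩
  rw [G130.toCommGroup_cyclicBoundary]
  fin_cases i <;> rfl
end

section
/- The group G₁₂₀ is isomorphic to the direct product B4 × ℤ, where the generators a1, b, a2 of G₁₂₀ correspond to σ1, σ2, σ3 respectively. -/
namespace G120aux
/-- Generators of the Gervais presentation of `PMod(1,2,0)`:
`b = of 0`, `a1 = of 1`, `a2 = of 2`, `c12 = of 3`, `c21 = of 4`. -/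
def g (i : Fin 5) : FreeGroup (Fin 5) := FreeGroup.of i
/-- The relator expressing that `x` and `y` commute. -/
def comm (x y : FreeGroup (Fin 5)) : FreeGroup (Fin 5) := x * y * (y * x)⁻¹
/-- The relator expressing the braid relation `x y x = y x y`. -/
def braid (x y : FreeGroup (Fin 5)) : FreeGroup (Fin 5) := x * y * x * (y * x * y)⁻¹
end G120aux

open G120aux in
/-- The relations of the Gervais presentation of `PMod(1,2,0)`. -/
def G120rels : Set (FreeGroup (Fin 5)) :=
  {comm (g 1) (g 2), braid (g 1) (g 0), braid (g 2) (g 0),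
   comm (g 3) (g 1), comm (g 3) (g 2), comm (g 3) (g 0),
   comm (g 4) (g 1), comm (g 4) (g 2), comm (g 4) (g 0),
   comm (g 3) (g 4),
   g 3 * g 4 * ((g 1 * g 0 * g 2) ^ 4)⁻¹}

/-- The Gervais presentation of the pure mapping class group `PMod(1,2,0)`. -/
abbrev G120 : Type := PresentedGroup G120rels

/-! Setting `δ = a₁ * b * a₂`, the braid relations say that conjugation by `δ` carries `a₁` to `b`
and `b` to `a₂`, and conjugation by `δ ^ 2` carries `a₂` back to `a₁`. Hence `δ ^ 4` is central in
the subgroup generated by `a₁`, `b`, `a₂`. The star relation expresses `c₂₁` as `c₁₂⁻¹ * δ ^ 4`, and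
centrality of `δ ^ 4` makes all commutation relations of this element consequences of those of
`c₁₂`. Eliminating `c₂₁` leaves the presentation of `B₄` with one extra central generator `c₁₂`. -/

/-- The defining relations of the braid group on four strands, for a triple of elements `x`, `y`,
`z` standing for `σ₁`, `σ₂`, `σ₃`. -/
structure ArtinRelations {M : Type*} [Mul M] (x y z : M) : Prop where
  braid_left : x * y * x = y * x * y
  braid_right : y * z * y = z * y * z
  commute : Commute x z

namespace ArtinRelations

theorem map {M N F : Type*} [Mul M] [Mul N] [FunLike F M N] [MulHomClass F M N] {x y z : M}
    (h : ArtinRelations x y z) (f : F) : ArtinRelations (f x) (f y) (f z) where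
  braid_left := by simp only [← map_mul, h.braid_left]
  braid_right := by simp only [← map_mul, h.braid_right]
  commute := h.commute.map f

section Semigroup

variable {S : Type*} [Semigroup S] {x y z : S}

theorem semiconjBy_left (h : ArtinRelations x y z) : SemiconjBy (x * y * z) x y :=
  calc x * y * z * x = x * y * (z * x) := mul_assoc _ _ _
    _ = x * y * x * z := by rw [← h.commute.eq, ← mul_assoc]
    _ = y * (x * y * z) := by simp only [h.braid_left, mul_assoc]

theorem semiconjBy_middle (h : ArtinRelations x y z) : SemiconjBy (x * y * z) y z :=
  calc x * y * z * y = x * (y * z * y) := by simp only [mul_assoc]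
    _ = x * z * (y * z) := by simp only [h.braid_right, mul_assoc]
    _ = z * (x * y * z) := by simp only [h.commute.eq, mul_assoc]

theorem semiconjBy_right (h : ArtinRelations x y z) :
    SemiconjBy (x * y * z * (x * y * z)) z x :=
  calc x * y * z * (x * y * z) * z = x * y * (z * x) * y * z * z := by simp only [mul_assoc]
    _ = x * y * x * (z * y * z) * z := by rw [← h.commute.eq]; simp only [mul_assoc]
    _ = x * (y * x * y) * z * y * z := by rw [← h.braid_right]; simp only [mul_assoc]
    _ = x * x * y * (x * z) * y * z := by rw [← h.braid_left]; simp only [mul_assoc]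
    _ = x * (x * y * z * (x * y * z)) := by rw [h.commute.eq]; simp only [mul_assoc]

end Semigroup

section Monoid

variable {M : Type*} [Monoid M] {x y z : M}

theorem commute_pow_four_left (h : ArtinRelations x y z) : Commute ((x * y * z) ^ 4) x := by
  have := h.semiconjBy_right.mul_left (h.semiconjBy_middle.mul_left h.semiconjBy_left)
  rwa [← sq (x * y * z), ← pow_add] at this

theorem commute_pow_four_middle (h : ArtinRelations x y z) : Commute ((x * y * z) ^ 4) y := by
  have := h.semiconjBy_left.mul_left (h.semiconjBy_right.mul_left h.semiconjBy_middle)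
  rwa [← sq, ← pow_succ, ← pow_succ'] at this

theorem commute_pow_four_right (h : ArtinRelations x y z) : Commute ((x * y * z) ^ 4) z := by
  have := h.semiconjBy_middle.mul_left (h.semiconjBy_left.mul_left h.semiconjBy_right)
  rwa [← sq, ← pow_succ', ← pow_succ'] at this

end Monoid

end ArtinRelations

/-- The relations of the Gervais presentation of the pure mapping class group of the genus-1
surface with two boundary components, for a quintuple of elements. Those among `a₁`, `b`, `a₂` are
the Artin relations of the chain `a₁`, `b`, `a₂`. -/
structure GervaisRelations {M : Type*} [Monoid M] (a₁ b a₂ c₁₂ c₂₁ : M) : Prop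
    extends ArtinRelations a₁ b a₂ where
  commute_c₁₂_a₁ : Commute c₁₂ a₁
  commute_c₁₂_b : Commute c₁₂ b
  commute_c₁₂_a₂ : Commute c₁₂ a₂
  commute_c₂₁_a₁ : Commute c₂₁ a₁
  commute_c₂₁_b : Commute c₂₁ b
  commute_c₂₁_a₂ : Commute c₂₁ a₂
  commute_c₁₂_c₂₁ : Commute c₁₂ c₂₁
  star : c₁₂ * c₂₁ = (a₁ * b * a₂) ^ 4

theorem ArtinRelations.gervaisRelations {H : Type*} [Group H] {x y z c : H}
    (h : ArtinRelations x y z) (hx : Commute c x) (hy : Commute c y) (hz : Commute c z) :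
    GervaisRelations x y z c (c⁻¹ * (x * y * z) ^ 4) where
  toArtinRelations := h
  commute_c₁₂_a₁ := hx
  commute_c₁₂_b := hy
  commute_c₁₂_a₂ := hz
  commute_c₂₁_a₁ := hx.inv_left.mul_left h.commute_pow_four_left
  commute_c₂₁_b := hy.inv_left.mul_left h.commute_pow_four_middle
  commute_c₂₁_a₂ := hz.inv_left.mul_left h.commute_pow_four_right
  commute_c₁₂_c₂₁ :=
    (Commute.refl c).inv_right.mul_right (((hx.mul_right hy).mul_right hz).pow_right 4)
  star := mul_inv_cancel_left c _

section PresentedGroup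

variable {α H : Type*} {rels : Set (FreeGroup α)} [Group H]

theorem freeGroup_lift_presentedGroup_of_eq_one :
    ∀ r ∈ rels, FreeGroup.lift (PresentedGroup.of (rels := rels)) r = 1 := by
  have h_mk : FreeGroup.lift PresentedGroup.of = PresentedGroup.mk rels :=
    FreeGroup.ext_hom _ _ fun _ => FreeGroup.lift_apply_of
  intro r hr
  rw [h_mk, PresentedGroup.one_of_mem hr]

theorem commute_map_presentedGroup {f : PresentedGroup rels →* H} {c : H}
    (h : ∀ i, Commute (f (.of i)) c) (x : PresentedGroup rels) : Commute (f x) c :=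
  Subgroup.mem_centralizer_singleton_iff.mp <|
    PresentedGroup.generated_by rels ((Subgroup.centralizer {c}).comap f)
      (fun i => Subgroup.mem_centralizer_singleton_iff.mpr (h i)) x

end PresentedGroup

namespace B4

variable {H : Type*} [Group H]

theorem forall_lift_eq_one_iff {f : Fin 3 → H} :
    (∀ r ∈ B4rels, FreeGroup.lift f r = 1) ↔ ArtinRelations (f 0) (f 1) (f 2) := by
  simp only [B4rels, Set.forall_mem_insert, Set.mem_singleton_iff, forall_eq, map_mul, map_inv,
    FreeGroup.lift_apply_of, mul_inv_eq_one]
  exact ⟨fun ⟨h₁, h₂, h₃⟩ => ⟨h₁, h₂, h₃⟩, fun h => ⟨h.braid_left, h.braid_right, h.commute⟩⟩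

/-- The first standard generator of `B4`. -/
abbrev σ₁ : B4 := PresentedGroup.of 0

/-- The second standard generator of `B4`. -/
abbrev σ₂ : B4 := PresentedGroup.of 1

/-- The third standard generator of `B4`. -/
abbrev σ₃ : B4 := PresentedGroup.of 2

theorem artinRelations : ArtinRelations σ₁ σ₂ σ₃ :=
  forall_lift_eq_one_iff.mp freeGroup_lift_presentedGroup_of_eq_one

/-- The universal property of `B4`: the homomorphism sending `σ₁`, `σ₂`, `σ₃` to a triple that
satisfies the Artin relations. -/
def lift {x y z : H} (h : ArtinRelations x y z) : B4 →* H :=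
  PresentedGroup.toGroup (f := ![x, y, z]) (forall_lift_eq_one_iff.mpr h)

section lift

variable {x y z : H} (h : ArtinRelations x y z)

@[simp] theorem lift_σ₁ : lift h σ₁ = x := PresentedGroup.toGroup.of _

@[simp] theorem lift_σ₂ : lift h σ₂ = y := PresentedGroup.toGroup.of _

@[simp] theorem lift_σ₃ : lift h σ₃ = z := PresentedGroup.toGroup.of _

theorem commute_lift {c : H} (hx : Commute x c) (hy : Commute y c) (hz : Commute z c) (w : B4) :
    Commute (lift h w) c :=
  commute_map_presentedGroup (fun i => by fin_cases i <;> simpa) w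

end lift

theorem hom_ext {f g : B4 →* H} (h₁ : f σ₁ = g σ₁) (h₂ : f σ₂ = g σ₂) (h₃ : f σ₃ = g σ₃) :
    f = g :=
  PresentedGroup.ext fun i => by fin_cases i <;> assumption

end B4

namespace G120

open B4 (σ₁ σ₂ σ₃)

variable {H : Type*} [Group H]

theorem forall_lift_eq_one_iff {f : Fin 5 → H} :
    (∀ r ∈ G120rels, FreeGroup.lift f r = 1) ↔
      GervaisRelations (f 1) (f 0) (f 2) (f 3) (f 4) := by
  simp only [G120rels, G120aux.comm, G120aux.braid, G120aux.g, Set.forall_mem_insert,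
    Set.mem_singleton_iff, forall_eq, map_mul, map_inv, map_pow, FreeGroup.lift_apply_of,
    mul_inv_eq_one]
  constructor
  · rintro ⟨a₁a₂, a₁b, a₂b, c₁₂a₁, c₁₂a₂, c₁₂b, c₂₁a₁, c₂₁a₂, c₂₁b, c₁₂c₂₁, star⟩
    exact ⟨⟨a₁b, a₂b.symm, a₁a₂⟩, c₁₂a₁, c₁₂b, c₁₂a₂, c₂₁a₁, c₂₁b, c₂₁a₂, c₁₂c₂₁, star⟩
  · intro h
    exact ⟨h.commute, h.braid_left, h.braid_right.symm, h.commute_c₁₂_a₁, h.commute_c₁₂_a₂,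
      h.commute_c₁₂_b, h.commute_c₂₁_a₁, h.commute_c₂₁_a₂, h.commute_c₂₁_b, h.commute_c₁₂_c₂₁,
      h.star⟩

/-- The generator `b` of the Gervais presentation. -/
abbrev b : G120 := PresentedGroup.of 0

/-- The generator `a₁` of the Gervais presentation. -/
abbrev a₁ : G120 := PresentedGroup.of 1

/-- The generator `a₂` of the Gervais presentation. -/
abbrev a₂ : G120 := PresentedGroup.of 2

/-- The boundary generator `c₁₂` of the Gervais presentation. -/
abbrev c₁₂ : G120 := PresentedGroup.of 3

/-- The boundary generator `c₂₁` of the Gervais presentation. -/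
abbrev c₂₁ : G120 := PresentedGroup.of 4

theorem gervaisRelations : GervaisRelations a₁ b a₂ c₁₂ c₂₁ :=
  forall_lift_eq_one_iff.mp freeGroup_lift_presentedGroup_of_eq_one

theorem c₂₁_eq_inv_mul_pow_four : c₂₁ = c₁₂⁻¹ * (a₁ * b * a₂) ^ 4 :=
  eq_inv_mul_of_mul_eq gervaisRelations.star

/-- The universal property of `G120` after elimination of `c₂₁`: the homomorphism sending `a₁`, `b`,
`a₂` to a triple that satisfies the Artin relations, and `c₁₂` to an element commuting with it. -/
def lift {x y z c : H} (h : ArtinRelations x y z) (hx : Commute c x) (hy : Commute c y)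
    (hz : Commute c z) : G120 →* H :=
  PresentedGroup.toGroup (f := ![y, x, z, c, c⁻¹ * (x * y * z) ^ 4])
    (forall_lift_eq_one_iff.mpr (h.gervaisRelations hx hy hz))

section lift

variable {x y z c : H} (h : ArtinRelations x y z) (hx : Commute c x) (hy : Commute c y)
  (hz : Commute c z)

@[simp] theorem lift_a₁ : lift h hx hy hz a₁ = x := PresentedGroup.toGroup.of _

@[simp] theorem lift_b : lift h hx hy hz b = y := PresentedGroup.toGroup.of _

@[simp] theorem lift_a₂ : lift h hx hy hz a₂ = z := PresentedGroup.toGroup.of _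

@[simp] theorem lift_c₁₂ : lift h hx hy hz c₁₂ = c := PresentedGroup.toGroup.of _

end lift

theorem hom_ext {f g : G120 →* H} (h_a₁ : f a₁ = g a₁) (h_b : f b = g b) (h_a₂ : f a₂ = g a₂)
    (h_c₁₂ : f c₁₂ = g c₁₂) : f = g := by
  have h_c₂₁ : f c₂₁ = g c₂₁ := by
    simp only [c₂₁_eq_inv_mul_pow_four, map_mul, map_inv, map_pow, h_a₁, h_b, h_a₂, h_c₁₂]
  exact PresentedGroup.ext fun i => by fin_cases i <;> assumption

/-- The homomorphism `G120 →* B4 × ℤ` sending `a₁`, `b`, `a₂` to `σ₁`, `σ₂`, `σ₃` and `c₁₂` to the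
generator of `ℤ`. -/
def toProd : G120 →* B4 × Multiplicative ℤ :=
  lift (c := MonoidHom.inr B4 _ (.ofAdd 1)) (B4.artinRelations.map (MonoidHom.inl B4 _))
    (MonoidHom.commute_inl_inr _ _).symm (MonoidHom.commute_inl_inr _ _).symm
    (MonoidHom.commute_inl_inr _ _).symm

@[simp] theorem toProd_a₁ : toProd a₁ = (σ₁, 1) := lift_a₁ ..

@[simp] theorem toProd_b : toProd b = (σ₂, 1) := lift_b ..

@[simp] theorem toProd_a₂ : toProd a₂ = (σ₃, 1) := lift_a₂ ..

@[simp] theorem toProd_c₁₂ : toProd c₁₂ = (1, .ofAdd 1) := lift_c₁₂ ..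

/-- The homomorphism `B4 →* G120` sending `σ₁`, `σ₂`, `σ₃` to the chain `a₁`, `b`, `a₂`. -/
def ofB4 : B4 →* G120 := B4.lift gervaisRelations.toArtinRelations

@[simp] theorem ofB4_σ₁ : ofB4 σ₁ = a₁ := B4.lift_σ₁ _

@[simp] theorem ofB4_σ₂ : ofB4 σ₂ = b := B4.lift_σ₂ _

@[simp] theorem ofB4_σ₃ : ofB4 σ₃ = a₂ := B4.lift_σ₃ _

theorem commute_ofB4_c₁₂ (w : B4) : Commute (ofB4 w) c₁₂ :=
  B4.commute_lift _ gervaisRelations.commute_c₁₂_a₁.symm gervaisRelations.commute_c₁₂_b.symm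
    gervaisRelations.commute_c₁₂_a₂.symm w

theorem commute_ofB4_zpowersHom_c₁₂ (w : B4) (n : Multiplicative ℤ) :
    Commute (ofB4 w) (zpowersHom G120 c₁₂ n) :=
  (commute_ofB4_c₁₂ w).zpow_right n.toAdd

/-- The homomorphism `B4 × ℤ →* G120` that is `ofB4` on the first factor and sends the generator of
the second to `c₁₂`. -/
def ofProd : B4 × Multiplicative ℤ →* G120 :=
  ofB4.noncommCoprod (zpowersHom G120 c₁₂) commute_ofB4_zpowersHom_c₁₂

theorem ofProd_comp_toProd : ofProd.comp toProd = MonoidHom.id G120 := by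
  apply hom_ext <;> simp [ofProd]

theorem toProd_comp_ofB4 : toProd.comp ofB4 = MonoidHom.inl B4 (Multiplicative ℤ) := by
  apply B4.hom_ext <;> simp

theorem toProd_comp_zpowersHom_c₁₂ :
    toProd.comp (zpowersHom G120 c₁₂) = MonoidHom.inr B4 (Multiplicative ℤ) := by
  ext1
  simp

theorem toProd_comp_ofProd : toProd.comp ofProd = MonoidHom.id (B4 × Multiplicative ℤ) := by
  simp only [ofProd, MonoidHom.comp_noncommCoprod, toProd_comp_ofB4, toProd_comp_zpowersHom_c₁₂,
    MonoidHom.noncommCoprod_inl_inr]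

/-- The isomorphism `G120 ≃* B4 × ℤ` given by `toProd`. -/
def mulEquivProd : G120 ≃* B4 × Multiplicative ℤ :=
  toProd.toMulEquiv ofProd ofProd_comp_toProd toProd_comp_ofProd

end G120

/-- Proposition 10: `PMod(1,2,0)`, given by the Gervais presentation, is isomorphic to
`B₄ × ℤ`, with the generators `a1, b, a2` corresponding to `σ1, σ2, σ3` respectively. -/
theorem stmt_9 :
    ∃ e : G120 ≃* B4 × Multiplicative ℤ,
      e (PresentedGroup.of 1) = (PresentedGroup.of 0, 1) ∧
      e (PresentedGroup.of 0) = (PresentedGroup.of 1, 1) ∧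
      e (PresentedGroup.of 2) = (PresentedGroup.of 2, 1) :=
  ⟨G120.mulEquivProd, G120.toProd_a₁, G120.toProd_b, G120.toProd_a₂⟩
end

section
/- The group homomorphism from B4 to G₁₂₀ sending σ1 to a1, σ2 to b, and σ3 to a2 (well defined since the braid relations of B4 hold among these elements of G₁₂₀) is injective; in particular a1, a2, b generate a subgroup of G₁₂₀ isomorphic to B4. -/
/-!
Write `δ = σ₁ σ₂ σ₃` in the braid group. Conjugation by `δ` carries `σ₁` to `σ₂` and `σ₂` to `σ₃`,
and conjugation by `δ ^ 2` carries `σ₃` to `σ₁`, so `δ ^ 4` is central. The star relation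
`c₁₂ c₂₁ = (a₁ b a₂) ^ 4` of `G120` therefore survives in `B4` when `c₁₂` is sent to `δ ^ 4` and
`c₂₁` to `1`; the resulting homomorphism `G120 → B4` is a left inverse of the given one.
-/

/-- The three defining relations of the braid group on four strands, imposed on elements
`s`, `t`, `u` playing the roles of `σ₁`, `σ₂`, `σ₃`. -/
structure IsBraidTriple {M : Type*} [Monoid M] (s t u : M) : Prop where
  braid_left : s * t * s = t * s * t
  braid_right : t * u * t = u * t * u
  commute : Commute s u

namespace IsBraidTriple

section Monoid

variable {M : Type*} [Monoid M] {s t u : M}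

theorem semiconjBy_mul_left (h : IsBraidTriple s t u) : SemiconjBy (s * t * u) s t :=
  calc s * t * u * s
    _ = s * t * (u * s) := mul_assoc _ _ _
    _ = s * t * (s * u) := by rw [h.commute.eq]
    _ = s * t * s * u := (mul_assoc _ _ _).symm
    _ = t * s * t * u := by rw [h.braid_left]
    _ = t * (s * t * u) := by simp only [mul_assoc]

theorem semiconjBy_mul_middle (h : IsBraidTriple s t u) : SemiconjBy (s * t * u) t u :=
  calc s * t * u * t
    _ = s * (t * u * t) := by simp only [mul_assoc]
    _ = s * (u * t * u) := by rw [h.braid_right]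
    _ = s * u * (t * u) := by simp only [mul_assoc]
    _ = u * s * (t * u) := by rw [h.commute.eq]
    _ = u * (s * t * u) := by simp only [mul_assoc]

theorem semiconjBy_sq_right (h : IsBraidTriple s t u) : SemiconjBy ((s * t * u) ^ 2) u s :=
  calc (s * t * u) ^ 2 * u
    _ = s * t * (u * s) * t * u * u := by simp only [sq, mul_assoc]
    _ = s * t * (s * u) * t * u * u := by rw [h.commute.eq]
    _ = s * t * s * (u * t * u) * u := by simp only [mul_assoc]
    _ = s * t * s * (t * u * t) * u := by rw [h.braid_right]
    _ = s * (t * s * t) * u * t * u := by simp only [mul_assoc]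
    _ = s * (s * t * s) * u * t * u := by rw [h.braid_left]
    _ = s * s * t * (s * u) * t * u := by simp only [mul_assoc]
    _ = s * s * t * (u * s) * t * u := by rw [h.commute.eq]
    _ = s * (s * t * u) ^ 2 := by simp only [sq, mul_assoc]

theorem semiconjBy_sq_left (h : IsBraidTriple s t u) : SemiconjBy ((s * t * u) ^ 2) s u := by
  rw [sq]
  exact h.semiconjBy_mul_middle.mul_left h.semiconjBy_mul_left

theorem commute_pow_four_left (h : IsBraidTriple s t u) : Commute ((s * t * u) ^ 4) s := by
  rw [pow_add _ 2 2]
  exact h.semiconjBy_sq_right.mul_left h.semiconjBy_sq_left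

theorem commute_pow_four_right (h : IsBraidTriple s t u) : Commute ((s * t * u) ^ 4) u := by
  rw [pow_add _ 2 2]
  exact h.semiconjBy_sq_left.mul_left h.semiconjBy_sq_right

-- `t ↦ u ↦ s ↦ t` under `δ`, then `δ ^ 2`, then `δ`, which avoids inverting `δ = s * t * u`.
theorem commute_pow_four_middle (h : IsBraidTriple s t u) : Commute ((s * t * u) ^ 4) t := by
  rw [pow_succ, pow_succ']
  exact (h.semiconjBy_mul_left.mul_left h.semiconjBy_sq_right).mul_left h.semiconjBy_mul_middle

end Monoid

section Group

variable {G : Type*} [Group G] {s t u : G}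

theorem lift_eq_one_of_mem_B4rels (h : IsBraidTriple s t u) :
    ∀ r ∈ B4rels, FreeGroup.lift ![s, t, u] r = 1 := by
  rintro r (rfl | rfl | rfl) <;>
    simp only [map_mul, map_inv, FreeGroup.lift_apply_of, mul_inv_eq_one]
  exacts [h.braid_left, h.braid_right, h.commute]

/-- The homomorphism out of `B4` sending `σ₁`, `σ₂`, `σ₃` to a given braid triple. -/
def liftB4 (h : IsBraidTriple s t u) : B4 →* G :=
  PresentedGroup.toGroup h.lift_eq_one_of_mem_B4rels

theorem liftB4_of (h : IsBraidTriple s t u) (i : Fin 3) :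
    h.liftB4 (PresentedGroup.of i) = ![s, t, u] i :=
  PresentedGroup.toGroup.of _

theorem lift_eq_one_of_mem_G120rels (h : IsBraidTriple s t u) :
    ∀ r ∈ G120rels, FreeGroup.lift ![t, s, u, (s * t * u) ^ 4, 1] r = 1 := by
  rintro r (rfl | rfl | rfl | rfl | rfl | rfl | rfl | rfl | rfl | rfl | rfl) <;>
    simp only [G120aux.comm, G120aux.braid, G120aux.g, map_mul, map_inv, map_pow,
      FreeGroup.lift_apply_of, mul_inv_eq_one]
  exacts [h.commute, h.braid_left, h.braid_right.symm,
    h.commute_pow_four_left, h.commute_pow_four_right, h.commute_pow_four_middle,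
    Commute.one_left s, Commute.one_left u, Commute.one_left t,
    Commute.one_right _, mul_one _]

/-- The homomorphism out of `G120` determined by a braid triple `s`, `t`, `u`: it sends `a₁`, `b`,
`a₂` to `s`, `t`, `u`, and satisfies the star relation through `c₁₂ ↦ (s * t * u) ^ 4`,
`c₂₁ ↦ 1`. -/
def liftG120 (h : IsBraidTriple s t u) : G120 →* G :=
  PresentedGroup.toGroup h.lift_eq_one_of_mem_G120rels

theorem liftG120_of (h : IsBraidTriple s t u) (i : Fin 5) :
    h.liftG120 (PresentedGroup.of i) = ![t, s, u, (s * t * u) ^ 4, 1] i :=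
  PresentedGroup.toGroup.of _

end Group

end IsBraidTriple

theorem B4.isBraidTriple_of :
    IsBraidTriple (PresentedGroup.of 0 : B4) (PresentedGroup.of 1) (PresentedGroup.of 2) where
  braid_left := PresentedGroup.mk_eq_mk_of_mul_inv_mem (.inl rfl)
  braid_right := PresentedGroup.mk_eq_mk_of_mul_inv_mem (.inr (.inl rfl))
  commute := PresentedGroup.mk_eq_mk_of_mul_inv_mem (.inr (.inr rfl))

theorem G120.isBraidTriple_of :
    IsBraidTriple (PresentedGroup.of 1 : G120) (PresentedGroup.of 0) (PresentedGroup.of 2) where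
  braid_left := PresentedGroup.mk_eq_mk_of_mul_inv_mem (.inr (.inl rfl))
  braid_right := (PresentedGroup.mk_eq_mk_of_mul_inv_mem (.inr (.inr (.inl rfl)))).symm
  commute := PresentedGroup.mk_eq_mk_of_mul_inv_mem (.inl rfl)

theorem IsBraidTriple.liftG120_comp_liftB4 {G : Type*} [Group G] {s t u : G}
    (h : IsBraidTriple s t u) :
    h.liftG120.comp G120.isBraidTriple_of.liftB4 = h.liftB4 := by
  ext i
  rw [MonoidHom.comp_apply, liftB4_of, liftB4_of]
  fin_cases i <;> exact h.liftG120_of _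

theorem B4.liftB4_isBraidTriple_of : B4.isBraidTriple_of.liftB4 = MonoidHom.id B4 := by
  ext i
  rw [IsBraidTriple.liftB4_of]
  fin_cases i <;> rfl

/-- Proposition 10 (first part): the homomorphism `B₄ → PMod(1,2,0)` sending `σ1, σ2, σ3`
to `a1, b, a2` is injective, i.e. `a1, a2, b` generate a copy of `B₄` in `PMod(1,2,0)`. -/
theorem stmt_11 :
    ∃ f : B4 →* G120,
      f (PresentedGroup.of 0) = PresentedGroup.of 1 ∧
      f (PresentedGroup.of 1) = PresentedGroup.of 0 ∧
      f (PresentedGroup.of 2) = PresentedGroup.of 2 ∧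
      Function.Injective f := by
  let f : B4 →* G120 := G120.isBraidTriple_of.liftB4
  let r : G120 →* B4 := B4.isBraidTriple_of.liftG120
  have left_inverse : Function.LeftInverse r f := DFunLike.congr_fun <|
    B4.isBraidTriple_of.liftG120_comp_liftB4.trans B4.liftB4_isBraidTriple_of
  exact ⟨f, IsBraidTriple.liftB4_of _ 0, IsBraidTriple.liftB4_of _ 1,
    IsBraidTriple.liftB4_of _ 2, left_inverse.injective⟩
end

section
/- In B4, the element (σ1^2*σ3*σ2)^3 is a nontrivial element of the center of B4. -/
/-!
Write `d = abc` for three elements satisfying the braid relations of `B4`. Conjugation by `d` sends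
`a` to `b` and `b` to `c`, so `(ad)³ = abc·d³ = d⁴`. Hence `d⁴` commutes with both `d` and `ad`,
therefore with `a` and its `d`-conjugates `b` and `c`. Since `c` conjugates `ad` to `a²cb`, the cube
`(a²cb)³` is conjugate to the central element `d⁴`, and so equal to it. It is nontrivial because its
exponent sum is `12`.
-/

/-- Three elements satisfying the defining relations of the standard generators of `B4`, with
`b` playing the role of the middle generator `σ2`. -/
structure IsBraidTriple_s18 {M : Type*} [Mul M] (a b c : M) : Prop where
  braid_left : a * b * a = b * a * b
  braid_right : b * c * b = c * b * c
  commute : Commute a c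

section Semigroup

variable {S : Type*} [Semigroup S] {a b c : S}

lemma semiconjBy_mul_mul_left_of_braid (hab : a * b * a = b * a * b) (hac : Commute a c) :
    SemiconjBy (a * b * c) a b :=
  calc
    a * b * c * a = a * b * a * c := by simp only [mul_assoc, hac.eq]
    _ = b * (a * b * c) := by simp only [hab, mul_assoc]

lemma semiconjBy_mul_mul_right_of_braid (hbc : b * c * b = c * b * c) (hac : Commute a c) :
    SemiconjBy (a * b * c) b c :=
  calc
    a * b * c * b = a * (b * c * b) := by simp only [mul_assoc]
    _ = a * c * (b * c) := by simp only [hbc, mul_assoc]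
    _ = c * (a * b * c) := by simp only [hac.eq, mul_assoc]

end Semigroup

lemma commute_of_semiconjBy {G : Type*} [Group G] {z d x y : G} (hzd : Commute z d)
    (hxy : SemiconjBy d x y) (hzx : Commute z x) : Commute z y := by
  rw [eq_mul_inv_of_mul_eq hxy.eq.symm]
  exact (hzd.mul_right hzx).mul_right hzd.inv_right

namespace IsBraidTriple_s18

section Monoid

variable {M : Type*} [Monoid M] {a b c : M}

lemma mul_prod_pow_three (h : IsBraidTriple_s18 a b c) : (a * (a * b * c)) ^ 3 = (a * b * c) ^ 4 := by
  have hab := semiconjBy_mul_mul_left_of_braid h.braid_left h.commute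
  have hbc := semiconjBy_mul_mul_right_of_braid h.braid_right h.commute
  generalize hd : a * b * c = d at hab hbc ⊢
  calc
    (a * d) ^ 3 = a * (d * a) * (d * a) * d := by simp only [pow_succ, pow_zero, one_mul, mul_assoc]
    _ = a * b * (d * b) * d * d := by simp only [hab.eq, mul_assoc]
    _ = a * b * c * d * d * d := by simp only [hbc.eq, mul_assoc]
    _ = d ^ 4 := by simp only [hd, pow_succ, pow_zero, one_mul]

end Monoid

section Group

variable {G : Type*} [Group G] {a b c : G}

lemma commute_prod_pow_four (h : IsBraidTriple_s18 a b c) :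
    Commute ((a * b * c) ^ 4) a ∧ Commute ((a * b * c) ^ 4) b ∧ Commute ((a * b * c) ^ 4) c := by
  have hab := semiconjBy_mul_mul_left_of_braid h.braid_left h.commute
  have hbc := semiconjBy_mul_mul_right_of_braid h.braid_right h.commute
  have h_pow := h.mul_prod_pow_three
  generalize a * b * c = d at hab hbc h_pow ⊢
  have hd : Commute (d ^ 4) d := .pow_self d 4
  have had : Commute (d ^ 4) (a * d) := h_pow ▸ .pow_self (a * d) 3
  have ha : Commute (d ^ 4) a := by simpa using had.mul_right hd.inv_right
  have hb : Commute (d ^ 4) b := commute_of_semiconjBy hd hab ha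
  have hc : Commute (d ^ 4) c := commute_of_semiconjBy hd hbc hb
  exact ⟨ha, hb, hc⟩

lemma prod_pow_four_mem_center (h : IsBraidTriple_s18 a b c)
    (hgen : Subgroup.closure {a, b, c} = ⊤) : (a * b * c) ^ 4 ∈ Subgroup.center G := by
  obtain ⟨ha, hb, hc⟩ := h.commute_prod_pow_four
  rw [Subgroup.center_eq_iInf hgen]
  simp [Subgroup.mem_centralizer_singleton_iff, ha.eq, hb.eq, hc.eq]

lemma sq_mul_mul_pow_three (h : IsBraidTriple_s18 a b c) :
    (a ^ 2 * c * b) ^ 3 = (a * b * c) ^ 4 := by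
  have h_conj : SemiconjBy c (a * (a * b * c)) (a ^ 2 * c * b) :=
    calc
      c * (a * (a * b * c)) = (c * a ^ 2) * (b * c) := by simp only [sq, mul_assoc]
      _ = a ^ 2 * c * b * c := by simp only [(h.commute.symm.pow_right 2).eq, mul_assoc]
  have h_conj_pow : SemiconjBy c ((a * b * c) ^ 4) ((a ^ 2 * c * b) ^ 3) :=
    h.mul_prod_pow_three ▸ h_conj.pow_right 3
  obtain ⟨-, -, hc⟩ := h.commute_prod_pow_four
  exact mul_right_cancel (h_conj_pow.eq.symm.trans hc.symm.eq)

end Group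

end IsBraidTriple_s18

namespace B4

open PresentedGroup (of)

lemma isBraidTriple : IsBraidTriple_s18 (of 0 : B4) (of 1) (of 2) where
  braid_left := PresentedGroup.mk_eq_mk_of_mul_inv_mem (rels := B4rels) (.inl rfl)
  braid_right := PresentedGroup.mk_eq_mk_of_mul_inv_mem (rels := B4rels) (.inr (.inl rfl))
  commute := PresentedGroup.mk_eq_mk_of_mul_inv_mem (rels := B4rels) (.inr (.inr rfl))

lemma closure_generators : Subgroup.closure {(of 0 : B4), of 1, of 2} = ⊤ := by
  rw [← PresentedGroup.closure_range_of B4rels]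
  congr 1
  ext g
  simp [Fin.exists_fin_succ, eq_comm]

/-- The exponent sum of a braid: the homomorphism to `ℤ`, written multiplicatively, sending each
generator to `1`. -/
def degree : B4 →* Multiplicative ℤ :=
  PresentedGroup.toGroup (f := fun _ ↦ Multiplicative.ofAdd 1) <| by
    rintro r (rfl | rfl | rfl) <;> simp

@[simp]
lemma degree_of (i : Fin 3) : degree (of i) = Multiplicative.ofAdd 1 :=
  PresentedGroup.toGroup.of _

lemma toAdd_degree_sq_mul_mul_pow_three :
    (degree ((of 0 ^ 2 * of 2 * of 1 : B4) ^ 3)).toAdd = 12 := by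
  simp

end B4

/-- The element `(σ1² σ3 σ2)^3` is a nontrivial central element of `B₄`. -/
theorem stmt_18 :
    ((PresentedGroup.of 0 ^ 2 * PresentedGroup.of 2 * PresentedGroup.of 1 : B4) ^ 3) ∈
        Subgroup.center B4 ∧
      ((PresentedGroup.of 0 ^ 2 * PresentedGroup.of 2 * PresentedGroup.of 1 : B4) ^ 3) ≠ 1 := by
  constructor
  · rw [B4.isBraidTriple.sq_mul_mul_pow_three]
    exact B4.isBraidTriple.prod_pow_four_mem_center B4.closure_generators
  · intro h_one
    have hdegree := B4.toAdd_degree_sq_mul_mul_pow_three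
    rw [h_one, map_one, toAdd_one] at hdegree
    norm_num at hdegree
end
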